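/- Let {ψ_i(z)=T_i z+t_i}_{i=1}^N be a planar box-like self-affine IFS satisfying the ROSC in which every T_i is diagonal, (p_i)_{i=1}^N a positive probability vector, and μ the associated self-affine measure. For each q≥0, either max{γ_A(q),γ_B(q)} ≤ t(q) or min{γ_A(q),γ_B(q)} ≥ t(q), and the L^q-spectrum τ_μ(q) exists. (a) If max{γ_A(q),γ_B(q)} ≤ t(q), then τ_μ(q) = max{γ_A(q),γ_B(q)} = max{x+y : ∑_{i=1}^N p_i^q a_i^x b_i^y = 1, γ_B(q)−τ_B(q) ≤ x ≤ τ_A(q)} = max{x+y : ∑_{i=1}^N p_i^q a_i^x b_i^y = 1, γ_A(q)−τ_A(q) ≤ y ≤ τ_B(q)}. (b) If min{γ_A(q),γ_B(q)} ≥ t(q), then τ_μ(q) = min{x+y : ∑_{i=1}^N p_i^q a_i^x b_i^y = 1, τ_A(q) ≤ x ≤ γ_B(q)−τ_B(q)} = min{x+y : ∑_{i=1}^N p_i^q a_i^x b_i^y = 1, τ_B(q) ≤ y ≤ γ_A(q)−τ_A(q)}; moreover (b1) if ∑_{i=1}^N p_i^q a_i^{τ_A(q)} b_i^{γ_A(q)−τ_A(q)}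 log(a_i/b_i) ≥ 0 then τ_μ(q)=γ_A(q); (b2) if ∑_{i=1}^N p_i^q b_i^{τ_B(q)} a_i^{γ_B(q)−τ_B(q)} log(a_i/b_i) ≤ 0 then τ_μ(q)=γ_B(q); (b3) otherwise there exist x∈[τ_A(q),γ_B(q)−τ_B(q)] and y∈[τ_B(q),γ_A(q)−τ_A(q)] with ∑_{i=1}^N p_i^q a_i^x b_i^y = 1 and ∑_{i=1}^N p_i^q a_i^x b_i^y log(a_i/b_i) = 0 such that τ_μ(q) = x+y < min{γ_A(q),γ_B(q)}. -/

import Mathlib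

open MeasureTheory Filter Set
open scoped Classical

noncomputable section

namespace LqGIFS

/-! ### Mesh cubes, moment sums, L^q spectra, box dimension -/

/-- Closed cube of the `δ`-mesh of `ℝ`. -/
def meshCube1 (δ : ℝ) (k : ℤ) : Set ℝ := Set.Icc ((k : ℝ) * δ) (((k : ℝ) + 1) * δ)

/-- Closed cube of the `δ`-mesh of `ℝ²`. -/
def meshCube2 (δ : ℝ) (k : ℤ × ℤ) : Set (ℝ × ℝ) :=
  (Set.Icc ((k.1 : ℝ) * δ) (((k.1 : ℝ) + 1) * δ)) ×ˢ
    (Set.Icc ((k.2 : ℝ) * δ) (((k.2 : ℝ) + 1) * δ))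

/-- The moment sum `D_δ^q(ν)` for a measure on `ℝ` (cubes of zero measure are omitted,
so that at `q = 0` this counts the mesh cubes of positive measure). -/
def Dq1 (ν : Measure ℝ) (δ q : ℝ) : ℝ :=
  ∑' k : ℤ, if ν (meshCube1 δ k) = 0 then 0 else (ν (meshCube1 δ k)).toReal ^ q

/-- The moment sum `D_δ^q(ν)` for a measure on `ℝ²`. -/
def Dq2 (ν : Measure (ℝ × ℝ)) (δ q : ℝ) : ℝ :=
  ∑' k : ℤ × ℤ, if ν (meshCube2 δ k) = 0 then 0 else (ν (meshCube2 δ k)).toReal ^ q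

/-- The `L^q`-spectrum of a measure on `ℝ` exists and equals `s` (i.e. upper and lower
`L^q`-spectra coincide and equal `s`). -/
def HasLq1 (ν : Measure ℝ) (q s : ℝ) : Prop :=
  Tendsto (fun δ : ℝ => Real.log (Dq1 ν δ q) / (-Real.log δ))
    (nhdsWithin 0 (Set.Ioi 0)) (nhds s)

/-- The `L^q`-spectrum of a measure on `ℝ²` exists and equals `s`. -/
def HasLq2 (ν : Measure (ℝ × ℝ)) (q s : ℝ) : Prop :=
  Tendsto (fun δ : ℝ => Real.log (Dq2 ν δ q) / (-Real.log δ))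
    (nhdsWithin 0 (Set.Ioi 0)) (nhds s)

/-- Number of closed `δ`-mesh cubes of `ℝ²` meeting `X`. -/
def boxCount (X : Set (ℝ × ℝ)) (δ : ℝ) : ℕ :=
  Set.ncard {k : ℤ × ℤ | (X ∩ meshCube2 δ k).Nonempty}

/-- The box dimension of `X` exists and equals `d`. -/
def HasBoxDim (X : Set (ℝ × ℝ)) (d : ℝ) : Prop :=
  Tendsto (fun δ : ℝ => Real.log (boxCount X δ) / (-Real.log δ))
    (nhdsWithin 0 (Set.Ioi 0)) (nhds d)

/-! ### Matrices: 1-norm, spectral radius, permutation matrices -/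

/-- The 1-norm `‖A‖ = ∑_{i,j} |a_{ij}|` of a square matrix. -/
def mnorm {ι : Type*} [Fintype ι] (A : Matrix ι ι ℝ) : ℝ := ∑ i, ∑ j, |A i j|

/-- The spectral radius of a square real matrix, via the Gelfand formula. -/
def specRad {ι : Type*} [Fintype ι] [DecidableEq ι] (A : Matrix ι ι ℝ) : ℝ :=
  Filter.limsup (fun k : ℕ => (mnorm (A ^ k)) ^ ((k : ℝ)⁻¹)) Filter.atTop

/-- A square 0-1 matrix with exactly one 1 in each row and each column. -/
def IsPermMatrix {ι : Type*} (Z : Matrix ι ι ℝ) : Prop :=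
  (∀ i j, Z i j = 0 ∨ Z i j = 1) ∧ (∀ i, ∃! j, Z i j = 1) ∧ (∀ j, ∃! i, Z i j = 1)

/-! ### Directed graphs -/

/-- Strong connectivity of the finite directed graph with edge set `E`,
initial vertex map `ini` and terminal vertex map `ter`. -/
def GraphSC {V E : Type*} (ini ter : E → V) : Prop :=
  ∀ v v' : V, Relation.TransGen (fun u u' : V => ∃ e, ini e = u ∧ ter e = u') v v'

/-- The matrix `F^{(q)}_{x,y}` with entry `p_{e'}^q a_{e'}^x b_{e'}^y` at `(e,e')` when
`t(e) = i(e')`, and `0` otherwise. -/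
def FmatG {V E : Type*} (ini ter : E → V) (p a b : E → ℝ) (q x y : ℝ) :
    Matrix E E ℝ :=
  fun e e' => if ter e = ini e' then p e' ^ q * a e' ^ x * b e' ^ y else 0

/-- `f` is the entrywise product of the normalized left and right Perron vectors of the
irreducible matrix `F^{(q)}_{x,y(x)}` (spectral radius 1). -/
def IsPerronData {V E : Type*} [Fintype E] [DecidableEq E] (ini ter : E → V)
    (p a b : E → ℝ) (q x yx : ℝ) (f : E → ℝ) : Prop :=
  specRad (FmatG ini ter p a b q x yx) = 1 ∧
  ∃ u v : E → ℝ, (∀ e, 0 < u e) ∧ (∀ e, 0 < v e) ∧ (∑ e, u e) = 1 ∧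
    (FmatG ini ter p a b q x yx).mulVec u = u ∧
    (FmatG ini ter p a b q x yx).vecMul v = v ∧
    (∑ e, v e * u e) = 1 ∧ (∀ e, f e = v e * u e)

/-! ### Planar box-like graph-directed self-affine systems -/

/-- A planar box-like self-affine GIFS: a finite directed graph together with, for each
edge `e`, a contraction `ψ_e(z) = T_e z + t_e` whose linear part is the diagonal matrix
`diag(±a_e, ±b_e)` (when `diag e = true`) or the anti-diagonal matrix with entries
`±a_e` (top right) and `±b_e` (bottom left) (when `diag e = false`), `0 < a_e, b_e < 1`. -/
structure BoxLikeGIFS (V E : Type*) where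
  init : E → V
  term : E → V
  a : E → ℝ
  b : E → ℝ
  sa : E → ℝ
  sb : E → ℝ
  diag : E → Bool
  trans : E → ℝ × ℝ
  a_mem : ∀ e, a e ∈ Set.Ioo (0 : ℝ) 1
  b_mem : ∀ e, b e ∈ Set.Ioo (0 : ℝ) 1
  sa_mem : ∀ e, sa e = 1 ∨ sa e = -1
  sb_mem : ∀ e, sb e = 1 ∨ sb e = -1
  edge_exists : ∀ v, ∃ e, init e = v

namespace BoxLikeGIFS

variable {V E : Type*}

/-- The contraction `ψ_e`. -/
def map (S : BoxLikeGIFS V E) (e : E) : ℝ × ℝ → ℝ × ℝ := fun z =>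
  if S.diag e then
    (S.sa e * S.a e * z.1 + (S.trans e).1, S.sb e * S.b e * z.2 + (S.trans e).2)
  else
    (S.sa e * S.a e * z.2 + (S.trans e).1, S.sb e * S.b e * z.1 + (S.trans e).2)

def StronglyConnected (S : BoxLikeGIFS V E) : Prop := GraphSC S.init S.term

/-- The open unit square `(0,1)²`. -/
def unitSq : Set (ℝ × ℝ) := Set.Ioo (0 : ℝ) 1 ×ˢ Set.Ioo (0 : ℝ) 1

/-- The rectangular open set condition. -/
def ROSC (S : BoxLikeGIFS V E) : Prop :=
  (∀ e : E, S.map e '' unitSq ⊆ unitSq) ∧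
  ∀ e e' : E, e ≠ e' → S.init e = S.init e' →
    Disjoint (S.map e '' unitSq) (S.map e' '' unitSq)

/-- Positive weights summing to one at each vertex. -/
def IsWeights [Fintype E] (S : BoxLikeGIFS V E) (p : E → ℝ) : Prop :=
  (∀ e, 0 < p e) ∧ ∀ v : V, (∑ e : E, if S.init e = v then p e else 0) = 1

/-- `μ` is the associated graph-directed box-like self-affine measure family. -/
def IsGDMeasure [Fintype E] (S : BoxLikeGIFS V E) (p : E → ℝ)
    (μ : V → Measure (ℝ × ℝ)) : Prop :=
  (∀ v, IsProbabilityMeasure (μ v)) ∧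
  ∀ v : V, μ v =
    ∑ e : E, if S.init e = v then
      ENNReal.ofReal (p e) • ((μ (S.term e)).map (S.map e)) else (0 : Measure (ℝ × ℝ))

/-- `X` is the associated graph-directed self-affine carpet family. -/
def IsGDAttractor (S : BoxLikeGIFS V E) (X : V → Set (ℝ × ℝ)) : Prop :=
  (∀ v, (X v).Nonempty ∧ IsCompact (X v)) ∧
  ∀ v : V, X v = ⋃ e : E, ⋃ _ : S.init e = v, S.map e '' X (S.term e)

/-- The matrix `F^{(q)}_{x,y}` of the system. -/
def Fmat (S : BoxLikeGIFS V E) (p : E → ℝ) (q x y : ℝ) : Matrix E E ℝ :=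
  FmatG S.init S.term p S.a S.b q x y

/-- The `(2#E) × (2#E)` block matrix `𝒢^{(q)}_{x,y}`, indexed by `E × Bool`
(`false` = first index of the block, `true` = second). -/
def Gmat (S : BoxLikeGIFS V E) (p : E → ℝ) (τx τy : V → ℝ) (q x y : ℝ) :
    Matrix (E × Bool) (E × Bool) ℝ := fun i j =>
  if S.term i.1 = S.init j.1 then
    if S.diag j.1 then
      if i.2 = false ∧ j.2 = false then
        p j.1 ^ q * S.a j.1 ^ (x + τx (S.term j.1)) * S.b j.1 ^ (y - τx (S.term j.1))
      else if i.2 = true ∧ j.2 = true then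
        p j.1 ^ q * S.b j.1 ^ (x + τy (S.term j.1)) * S.a j.1 ^ (y - τy (S.term j.1))
      else 0
    else
      if i.2 = false ∧ j.2 = true then
        p j.1 ^ q * S.a j.1 ^ (x + τy (S.term j.1)) * S.b j.1 ^ (y - τy (S.term j.1))
      else if i.2 = true ∧ j.2 = false then
        p j.1 ^ q * S.b j.1 ^ (x + τx (S.term j.1)) * S.a j.1 ^ (y - τx (S.term j.1))
      else 0
  else 0

/-! ### Words -/

/-- An admissible word: consecutive edges are composable. -/
def Admissible (S : BoxLikeGIFS V E) (w : List E) : Prop :=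
  List.Chain' (fun e e' => S.term e = S.init e') w

/-- `(c_w, d_w)`: width and height of the rectangle `ψ_w([0,1]²)`. -/
def wdims (S : BoxLikeGIFS V E) : List E → ℝ × ℝ
  | [] => (1, 1)
  | e :: w =>
      if S.diag e then (S.a e * (wdims S w).1, S.b e * (wdims S w).2)
      else (S.a e * (wdims S w).2, S.b e * (wdims S w).1)

/-- Whether `T_w` is diagonal (`true`) or anti-diagonal (`false`). -/
def wordDiag (S : BoxLikeGIFS V E) : List E → Bool
  | [] => true
  | e :: w => S.diag e == wordDiag S w

/-- The larger singular value `α₁(w) = max(c_w, d_w)` of `T_w`. -/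
def alpha1 (S : BoxLikeGIFS V E) (w : List E) : ℝ := max (S.wdims w).1 (S.wdims w).2

/-- The smaller singular value `α₂(w) = min(c_w, d_w)` of `T_w`. -/
def alpha2 (S : BoxLikeGIFS V E) (w : List E) : ℝ := min (S.wdims w).1 (S.wdims w).2

/-- Initial vertex of a (nonempty) word. -/
def wordInit [Nonempty V] (S : BoxLikeGIFS V E) (w : List E) : V :=
  (w.head?.map S.init).getD (Classical.arbitrary V)

/-- Terminal vertex of a (nonempty) word. -/
def wordTerm [Nonempty V] (S : BoxLikeGIFS V E) (w : List E) : V :=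
  (w.getLast?.map S.term).getD (Classical.arbitrary V)

/-- `p_w = p_{w_1} ⋯ p_{w_k}`. -/
def wordProb (p : E → ℝ) (w : List E) : ℝ := (w.map p).prod

/-- `τ_w(q)`: given the values `τx v`, `τy v` of the `L^q`-spectra of the two coordinate
projections of `μ_v`, this is the `L^q`-spectrum of the projection of `μ_{t(w)} ∘ ψ_w⁻¹`
onto the longest side of `ψ_w([0,1]²)`, i.e. `τx (t w)` if `π_w = π_x` and `τy (t w)`
otherwise. -/
def wordTau [Nonempty V] (S : BoxLikeGIFS V E) (τx τy : V → ℝ) (w : List E) : ℝ :=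
  if ((S.wdims w).2 ≤ (S.wdims w).1 ↔ S.wordDiag w = true) then τx (S.wordTerm w)
  else τy (S.wordTerm w)

/-- The modified singular value function
`φ^{s,q}(w) = p_w^q α₁(w)^{τ_w(q)} α₂(w)^{s - τ_w(q)}`. -/
def msvf [Nonempty V] (S : BoxLikeGIFS V E) (p : E → ℝ) (τx τy : V → ℝ)
    (s q : ℝ) (w : List E) : ℝ :=
  wordProb p w ^ q * S.alpha1 w ^ (S.wordTau τx τy w) *
    S.alpha2 w ^ (s - S.wordTau τx τy w)

/-- The modified singular value function matrix `A_k^{s,q}`. -/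
def Amat [Nonempty V] [Fintype E] (S : BoxLikeGIFS V E) (p : E → ℝ) (τx τy : V → ℝ)
    (s q : ℝ) (k : ℕ) : Matrix V V ℝ := fun v v' =>
  ∑ f : Fin k → E,
    if S.Admissible (List.ofFn f) ∧ S.wordInit (List.ofFn f) = v ∧
        S.wordTerm (List.ofFn f) = v'
    then S.msvf p τx τy s q (List.ofFn f) else 0

/-- The family `E^*_δ` of admissible words whose shortest side drops below `δ`
exactly at the last letter. -/
def EstarDelta (S : BoxLikeGIFS V E) (δ : ℝ) : Set (List E) :=
  {w | w ≠ [] ∧ S.Admissible w ∧ S.alpha2 w < δ ∧ δ ≤ S.alpha2 w.dropLast}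

end BoxLikeGIFS

/-! ### Partition of the projections, for the splitting proposition -/

/-- The projection family: `(v, false) ↦ μ_v^x` and `(v, true) ↦ μ_v^y`. -/
def projMeas {V : Type*} (μ : V → Measure (ℝ × ℝ)) (i : V × Bool) : Measure ℝ :=
  if i.2 then (μ i.1).map Prod.snd else (μ i.1).map Prod.fst

/-- `A`, `B` is a partition of the projection family `{μ_v^x, μ_v^y}_v` into two disjoint
families of cardinality `#V`, on each of which the `L^q`-spectra exist and share a common
value, and which splits `{μ_v^x, μ_v^y}` for each `v`. -/
def GoodPartition {V : Type*} [Fintype V] (μ : V → Measure (ℝ × ℝ))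
    (A B : Finset (V × Bool)) : Prop :=
  Disjoint A B ∧ A ∪ B = Finset.univ ∧
  A.card = Fintype.card V ∧ B.card = Fintype.card V ∧
  ∃ τA τB : ℝ → ℝ,
    (∀ q : ℝ, 0 ≤ q → ∀ i ∈ A, HasLq1 (projMeas μ i) q (τA q)) ∧
    (∀ q : ℝ, 0 ≤ q → ∀ i ∈ B, HasLq1 (projMeas μ i) q (τB q)) ∧
    ∀ v : V, ((v, false) ∈ A ∧ (v, true) ∈ B) ∨ ((v, false) ∈ B ∧ (v, true) ∈ A)

end LqGIFS

end

open LqGIFS MeasureTheory Filter Set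

namespace LqGIFS

section Pressure

variable {N : ℕ}

/-- The weight `P_i a_i^x b_i^y`. -/
noncomputable def weight (P a b : Fin N → ℝ) (x y : ℝ) (i : Fin N) : ℝ :=
  P i * a i ^ x * b i ^ y

/-- The partition function `∑ P_i a_i^x b_i^y`. -/
noncomputable def partition (P a b : Fin N → ℝ) (x y : ℝ) : ℝ := ∑ i, weight P a b x y i

/-- The drift `∑ P_i a_i^x b_i^y log (a_i / b_i)`. -/
noncomputable def drift (P a b : Fin N → ℝ) (x y : ℝ) : ℝ :=
  ∑ i, weight P a b x y i * Real.log (a i / b i)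

variable {P a b : Fin N → ℝ}

lemma weight_pos (hP : ∀ i, 0 < P i) (ha : ∀ i, a i ∈ Ioo (0 : ℝ) 1)
    (hb : ∀ i, b i ∈ Ioo (0 : ℝ) 1) (x y : ℝ) (i : Fin N) : 0 < weight P a b x y i :=
  mul_pos (mul_pos (hP i) (Real.rpow_pos_of_pos (ha i).1 _)) (Real.rpow_pos_of_pos (hb i).1 _)

lemma weight_swap (x y : ℝ) (i : Fin N) : weight P b a y x i = weight P a b x y i := by
  unfold weight; ring

lemma partition_swap (x y : ℝ) : partition P b a y x = partition P a b x y := by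
  simp only [partition, weight_swap]

lemma drift_swap (ha : ∀ i, a i ∈ Ioo (0 : ℝ) 1) (hb : ∀ i, b i ∈ Ioo (0 : ℝ) 1) (x y : ℝ) :
    drift P b a y x = - drift P a b x y := by
  simp only [drift, ← Finset.sum_neg_distrib]
  refine Finset.sum_congr rfl fun i _ => ?_
  rw [weight_swap, Real.log_div (hb i).1.ne' (ha i).1.ne', Real.log_div (ha i).1.ne' (hb i).1.ne']
  ring

lemma partition_lt_left [NeZero N] (hP : ∀ i, 0 < P i) (ha : ∀ i, a i ∈ Ioo (0 : ℝ) 1)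
    (hb : ∀ i, b i ∈ Ioo (0 : ℝ) 1) {x x' y y' : ℝ} (hx : x < x') (hy : y ≤ y') :
    partition P a b x' y' < partition P a b x y := by
  refine Finset.sum_lt_sum_of_nonempty Finset.univ_nonempty fun i _ => ?_
  refine mul_lt_mul ?_ (Real.rpow_le_rpow_of_exponent_ge (hb i).1 (hb i).2.le hy)
    (Real.rpow_pos_of_pos (hb i).1 _) (mul_pos (hP i) (Real.rpow_pos_of_pos (ha i).1 _)).le
  exact mul_lt_mul_of_pos_left (Real.rpow_lt_rpow_of_exponent_gt (ha i).1 (ha i).2 hx) (hP i)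

lemma partition_lt_right [NeZero N] (hP : ∀ i, 0 < P i) (ha : ∀ i, a i ∈ Ioo (0 : ℝ) 1)
    (hb : ∀ i, b i ∈ Ioo (0 : ℝ) 1) {x x' y y' : ℝ} (hx : x ≤ x') (hy : y < y') :
    partition P a b x' y' < partition P a b x y := by
  rw [← partition_swap x' y', ← partition_swap x y]
  exact partition_lt_left hP hb ha hy hx

lemma le_iff_of_partition_eq [NeZero N] (hP : ∀ i, 0 < P i) (ha : ∀ i, a i ∈ Ioo (0 : ℝ) 1)
    (hb : ∀ i, b i ∈ Ioo (0 : ℝ) 1) {x x' y y' : ℝ}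
    (h : partition P a b x y = partition P a b x' y') : x ≤ x' ↔ y' ≤ y := by
  constructor
  · intro hx
    by_contra! hy
    exact (partition_lt_right hP ha hb hx hy).ne' h
  · intro hy
    by_contra! hx
    exact (partition_lt_left hP ha hb hx hy).ne h

lemma continuous_partition (ha : ∀ i, a i ∈ Ioo (0 : ℝ) 1)
    (hb : ∀ i, b i ∈ Ioo (0 : ℝ) 1) :
    Continuous fun z : ℝ × ℝ => partition P a b z.1 z.2 := by
  unfold partition weight
  refine continuous_finsetSum _ fun i _ => ?_
  refine (continuous_const.mul ?_).mul ?_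
  · exact (Real.continuous_const_rpow (ha i).1.ne').comp continuous_fst
  · exact (Real.continuous_const_rpow (hb i).1.ne').comp continuous_snd

lemma weight_eq_exp (ha : ∀ i, a i ∈ Ioo (0 : ℝ) 1) (hb : ∀ i, b i ∈ Ioo (0 : ℝ) 1)
    (x y : ℝ) (i : Fin N) :
    weight P a b x y i = P i * Real.exp (x * Real.log (a i) + y * Real.log (b i)) := by
  rw [weight, Real.rpow_def_of_pos (ha i).1, Real.rpow_def_of_pos (hb i).1, Real.exp_add]
  ring_nf

lemma partition_convexComb_le (hP : ∀ i, 0 < P i) (ha : ∀ i, a i ∈ Ioo (0 : ℝ) 1)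
    (hb : ∀ i, b i ∈ Ioo (0 : ℝ) 1) {l k : ℝ} (hl : 0 ≤ l) (hk : 0 ≤ k) (hlk : l + k = 1)
    (x y x' y' : ℝ) :
    partition P a b (l * x + k * x') (l * y + k * y') ≤
      l * partition P a b x y + k * partition P a b x' y' := by
  simp only [partition, Finset.mul_sum, ← Finset.sum_add_distrib]
  refine Finset.sum_le_sum fun i _ => ?_
  simp only [weight_eq_exp ha hb]
  have := convexOn_exp.2 (mem_univ (x * Real.log (a i) + y * Real.log (b i)))
    (mem_univ (x' * Real.log (a i) + y' * Real.log (b i))) hl hk hlk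
  simp only [smul_eq_mul] at this
  have h2 : (l * x + k * x') * Real.log (a i) + (l * y + k * y') * Real.log (b i) =
    l * (x * Real.log (a i) + y * Real.log (b i)) +
      k * (x' * Real.log (a i) + y' * Real.log (b i)) := by ring
  rw [h2]
  nlinarith [mul_le_mul_of_nonneg_left this (hP i).le]

lemma eventually_partition_lt (ha : ∀ i, a i ∈ Ioo (0 : ℝ) 1)
    (hb : ∀ i, b i ∈ Ioo (0 : ℝ) 1) (x y u v : ℝ)
    (h : ∑ i, weight P a b x y i * (u * Real.log (a i) + v * Real.log (b i)) < 0) :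
    ∀ᶠ s in nhdsWithin (0 : ℝ) (Ioi 0),
      partition P a b (x + s * u) (y + s * v) < partition P a b x y := by
  have hd : HasDerivAt (fun s : ℝ => partition P a b (x + s * u) (y + s * v))
      (∑ i, weight P a b x y i * (u * Real.log (a i) + v * Real.log (b i))) 0 := by
    unfold partition
    simp only [weight_eq_exp ha hb]
    refine HasDerivAt.fun_sum fun i _ => ?_
    have h1 : HasDerivAt (fun s : ℝ => (x + s * u) * Real.log (a i) +
        (y + s * v) * Real.log (b i)) (u * Real.log (a i) + v * Real.log (b i)) 0 := by
      have e1 : HasDerivAt (fun s : ℝ => x + s * u) u 0 := by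
        simpa using ((hasDerivAt_id (0 : ℝ)).mul_const u).const_add x
      have e2 : HasDerivAt (fun s : ℝ => y + s * v) v 0 := by
        simpa using ((hasDerivAt_id (0 : ℝ)).mul_const v).const_add y
      exact (e1.mul_const _).add (e2.mul_const _)
    have h2 := (h1.exp).const_mul (P i)
    simpa [mul_assoc] using h2
  have h3 := (hasDerivWithinAt_iff_tendsto_slope' (s := Ioi 0) (by simp)).1 hd.hasDerivWithinAt
  filter_upwards [h3.eventually (gt_mem_nhds h), self_mem_nhdsWithin] with s hs hs0
  rw [slope_def_field, div_neg_iff] at hs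
  have hs0' : (0 : ℝ) < s := hs0
  simp only [zero_mul, add_zero, sub_zero] at hs
  rcases hs with hs | hs
  · linarith [hs.2]
  · linarith [hs.1]

lemma sum_weight_log_neg [NeZero N] (hP : ∀ i, 0 < P i) (ha : ∀ i, a i ∈ Ioo (0 : ℝ) 1)
    (hb : ∀ i, b i ∈ Ioo (0 : ℝ) 1) (x y : ℝ) :
    ∑ i, weight P a b x y i * Real.log (b i) < 0 :=
  Finset.sum_neg (fun i _ => mul_neg_of_pos_of_neg (weight_pos hP ha hb x y i)
    (Real.log_neg (hb i).1 (hb i).2)) Finset.univ_nonempty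

lemma sum_weight_direction (ha : ∀ i, a i ∈ Ioo (0 : ℝ) 1) (hb : ∀ i, b i ∈ Ioo (0 : ℝ) 1)
    (x y u v : ℝ) :
    ∑ i, weight P a b x y i * (u * Real.log (a i) + v * Real.log (b i)) =
      u * drift P a b x y + (u + v) * ∑ i, weight P a b x y i * Real.log (b i) := by
  simp only [drift, Finset.mul_sum, ← Finset.sum_add_distrib]
  refine Finset.sum_congr rfl fun i _ => ?_
  rw [Real.log_div (ha i).1.ne' (hb i).1.ne']
  ring

/-- If the drift is nonpositive, moving along `(1, -1 + η)` decreases the partition function. -/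
lemma exists_partition_lt_of_drift_nonpos [NeZero N] (hP : ∀ i, 0 < P i)
    (ha : ∀ i, a i ∈ Ioo (0 : ℝ) 1) (hb : ∀ i, b i ∈ Ioo (0 : ℝ) 1) {x y η : ℝ}
    (hE : drift P a b x y ≤ 0) (hη : 0 < η) :
    ∃ s : ℝ, 0 < s ∧ partition P a b (x + s) (y - s + s * η) < partition P a b x y := by
  have h := eventually_partition_lt (P := P) ha hb x y 1 (-1 + η) (by
    rw [sum_weight_direction ha hb]
    nlinarith [sum_weight_log_neg hP ha hb x y])
  obtain ⟨s, hs, hs0⟩ := (h.and self_mem_nhdsWithin).exists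
  refine ⟨s, hs0, ?_⟩
  convert hs using 2 <;> ring

/-- First-order optimality: at a minimum of `x + y` on the level curve over `[x₀, ∞)`, either
`x = x₀` or the drift is nonpositive. -/
lemma drift_nonpos_of_minimal [NeZero N] (hP : ∀ i, 0 < P i)
    (ha : ∀ i, a i ∈ Ioo (0 : ℝ) 1) (hb : ∀ i, b i ∈ Ioo (0 : ℝ) 1) {x₀ x₁ y₁ x y : ℝ}
    (hxy : partition P a b x y = 1) (h₁ : partition P a b x₁ y₁ = 1) (hx₁ : x ≤ x₁)
    (hmin : ∀ x' y', partition P a b x' y' = 1 → x₀ ≤ x' → x' ≤ x₁ → x + y ≤ x' + y') :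
    x ≤ x₀ ∨ drift P a b x y ≤ 0 := by
  by_contra! hcon
  obtain ⟨hx, hE⟩ := hcon
  set L := ∑ i, weight P a b x y i * Real.log (b i) with hL
  have hLneg : L < 0 := sum_weight_log_neg hP ha hb x y
  obtain ⟨η, hη0, hη⟩ : ∃ η : ℝ, 0 < η ∧ -drift P a b x y - η * L < 0 := by
    refine ⟨drift P a b x y / (2 * (-L)), by apply div_pos hE; linarith, ?_⟩
    have : drift P a b x y / (2 * (-L)) * L = - (drift P a b x y / 2) := by
      have := hLneg.ne
      field_simp
    linarith
  have h := eventually_partition_lt (P := P) ha hb x y (-1) (1 - η) (by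
    rw [sum_weight_direction ha hb, ← hL]; linarith)
  obtain ⟨s, ⟨hs, hsx⟩, hs0⟩ := ((h.and ((Ioo_mem_nhdsGT (sub_pos.2 hx)))).and
    self_mem_nhdsWithin).exists
  have hs0' : (0 : ℝ) < s := hs0
  set x' := x + s * (-1) with hx'
  set z := y + s * (1 - η) with hz
  have hx'1 : x' ≤ x₁ := by linarith
  have hyz : y₁ ≤ z := by
    by_contra! hlt
    have := partition_lt_right hP ha hb hx'1 hlt
    linarith
  have hge : 1 ≤ partition P a b x' y₁ := by
    rcases hx'1.eq_or_lt with he | hlt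
    · rw [he, h₁]
    · rw [← h₁]; exact (partition_lt_left hP ha hb hlt le_rfl).le
  have hcont : ContinuousOn (fun y' => partition P a b x' y') (Icc y₁ z) :=
    ((continuous_partition ha hb).comp (Continuous.prodMk_right x')).continuousOn
  obtain ⟨y', hy', hF⟩ := intermediate_value_Icc' hyz hcont ⟨by linarith, hge⟩
  have h2 := hmin x' y' hF (by linarith [hsx.2]) hx'1
  have : s * η > 0 := mul_pos hs0' hη0
  linarith [hy'.2]

lemma add_le_max_of_partition_eq_one [NeZero N] (hP : ∀ i, 0 < P i)
    (ha : ∀ i, a i ∈ Ioo (0 : ℝ) 1) (hb : ∀ i, b i ∈ Ioo (0 : ℝ) 1) {x₀ y₀ x₁ y₁ x y : ℝ}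
    (h₀ : partition P a b x₀ y₀ = 1) (h₁ : partition P a b x₁ y₁ = 1)
    (h : partition P a b x y = 1) (hx₁ : x₁ ≤ x) (hx₀ : x ≤ x₀) :
    x + y ≤ max (x₀ + y₀) (x₁ + y₁) := by
  obtain ⟨k, l, hk, hl, hkl, rfl⟩ : x ∈ segment ℝ x₁ x₀ := by
    rw [segment_eq_Icc (hx₁.trans hx₀)]; exact ⟨hx₁, hx₀⟩
  simp only [smul_eq_mul] at *
  have hc := partition_convexComb_le hP ha hb hk hl hkl x₁ y₁ x₀ y₀
  rw [h₀, h₁] at hc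
  have hy : y ≤ k * y₁ + l * y₀ := by
    by_contra! hlt
    have := partition_lt_right hP ha hb (le_refl (k * x₁ + l * x₀)) hlt
    linarith
  have e1 := mul_le_mul_of_nonneg_left (le_max_right (x₀ + y₀) (x₁ + y₁)) hk
  have e2 := mul_le_mul_of_nonneg_left (le_max_left (x₀ + y₀) (x₁ + y₁)) hl
  have e3 : k * max (x₀ + y₀) (x₁ + y₁) + l * max (x₀ + y₀) (x₁ + y₁) =
    max (x₀ + y₀) (x₁ + y₁) := by rw [← add_mul, hkl, one_mul]
  linarith

/-- The minimum of `x + y` over an arc of the level curve is attained. -/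
lemma exists_minimal_on_curve [NeZero N] (hP : ∀ i, 0 < P i)
    (ha : ∀ i, a i ∈ Ioo (0 : ℝ) 1) (hb : ∀ i, b i ∈ Ioo (0 : ℝ) 1) {x₀ y₀ x₁ y₁ : ℝ}
    (h₀ : partition P a b x₀ y₀ = 1) (h₁ : partition P a b x₁ y₁ = 1) (hx : x₀ ≤ x₁) :
    ∃ x y, partition P a b x y = 1 ∧ x₀ ≤ x ∧ x ≤ x₁ ∧
      ∀ x' y', partition P a b x' y' = 1 → x₀ ≤ x' → x' ≤ x₁ → x + y ≤ x' + y' := by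
  set K : Set (ℝ × ℝ) := {z | partition P a b z.1 z.2 = 1} ∩ (Icc x₀ x₁ ×ˢ Icc y₁ y₀)
  have hK : IsCompact K := (isCompact_Icc.prod isCompact_Icc).inter_left
    (isClosed_eq (continuous_partition ha hb) continuous_const)
  have hmem : ∀ x y, partition P a b x y = 1 → x₀ ≤ x → x ≤ x₁ → (x, y) ∈ K := by
    intro x y h hx0 hx1
    exact ⟨h, ⟨hx0, hx1⟩, (le_iff_of_partition_eq hP ha hb (h.trans h₁.symm)).1 hx1,
      (le_iff_of_partition_eq hP ha hb (h₀.trans h.symm)).1 hx0⟩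
  obtain ⟨z, hz, hmin⟩ := hK.exists_isMinOn ⟨_, hmem x₀ y₀ h₀ le_rfl hx⟩
    (f := fun z : ℝ × ℝ => z.1 + z.2) (by fun_prop)
  exact ⟨z.1, z.2, hz.1, hz.2.1.1, hz.2.1.2, fun x' y' h hx0 hx1 => hmin (hmem x' y' h hx0 hx1)⟩

end Pressure

section Moment

open scoped ENNReal

/-- `x ↦ x ^ q` with the convention that zero is sent to zero also for `q = 0`. -/
noncomputable def momentPow (q : ℝ) (x : ℝ≥0∞) : ℝ≥0∞ := if x = 0 then 0 else x ^ q

lemma momentPow_mul {q : ℝ} {x y : ℝ≥0∞} (hx0 : x ≠ 0) :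
    momentPow q (x * y) = x ^ q * momentPow q y := by
  unfold momentPow
  by_cases hy : y = 0
  · simp [hy]
  · rw [if_neg (mul_ne_zero hx0 hy), if_neg hy, ENNReal.mul_rpow_of_ne_zero hx0 hy]

lemma momentPow_ne_top {q : ℝ} {x : ℝ≥0∞} (hq : 0 ≤ q) (hx : x ≠ ∞) : momentPow q x ≠ ∞ := by
  unfold momentPow
  split_ifs
  · simp
  · exact ENNReal.rpow_ne_top_of_nonneg hq hx

lemma tsum_ite_const_le {ι : Type*} {s : ι → Prop} {L : ℕ} (hL : {i | s i}.encard ≤ L)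
    (c : ℝ≥0∞) : ∑' i, (if s i then c else 0) ≤ L * c := by
  have hfin : {i | s i}.Finite := Set.finite_of_encard_le_coe hL
  rw [tsum_eq_sum (s := hfin.toFinset) (fun i hi => if_neg (by simpa using hi))]
  rw [Finset.sum_congr rfl (fun i hi => if_pos (by simpa using hi)), Finset.sum_const,
    nsmul_eq_mul]
  gcongr
  rw [hfin.encard_eq_coe_toFinset_card] at hL
  exact_mod_cast hL

/-- If every `f i` is dominated by the sum of the `g j` over the `j` related to `i`, and the
relation is finite-to-finite with uniform bounds, the `q`-moment sums are comparable. -/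
lemma tsum_momentPow_le {ι κ : Type*} {q : ℝ} (hq : 0 ≤ q) {f : ι → ℝ≥0∞} {g : κ → ℝ≥0∞}
    (R : ι → κ → Prop) {M L : ℕ}
    (hfg : ∀ i, f i ≤ ∑' j, if R i j then g j else 0)
    (hM : ∀ i, {j | R i j}.encard ≤ M) (hL : ∀ j, {i | R i j}.encard ≤ L) :
    ∑' i, momentPow q (f i) ≤ (M : ℝ≥0∞) ^ q * L * ∑' j, momentPow q (g j) := by
  have key : ∀ i, momentPow q (f i) ≤
      (M : ℝ≥0∞) ^ q * ∑' j, if R i j then momentPow q (g j) else 0 := by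
    intro i
    by_cases hf : f i = 0
    · simp [momentPow, hf]
    have hfin : {j | R i j}.Finite := Set.finite_of_encard_le_coe (hM i)
    have hcard : hfin.toFinset.card ≤ M := by
      have := hM i
      rw [hfin.encard_eq_coe_toFinset_card] at this
      exact_mod_cast this
    have h1 := hfg i
    rw [tsum_eq_sum (s := hfin.toFinset) (fun i hi => if_neg (by simpa using hi)),
      Finset.sum_congr rfl (fun i hi => if_pos (by simpa using hi))] at h1
    have hne : hfin.toFinset.Nonempty := by
      by_contra! h
      rw [h] at h1
      exact hf (by simpa using h1)
    obtain ⟨j, hj, hmax⟩ := Finset.exists_max_image hfin.toFinset g hne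
    have h2 : f i ≤ M * g j := by
      refine h1.trans ((Finset.sum_le_card_nsmul _ _ _ hmax).trans ?_)
      rw [nsmul_eq_mul]
      gcongr
    have hg : g j ≠ 0 := by
      intro h
      rw [h, mul_zero] at h2
      exact hf (by simpa using h2)
    calc momentPow q (f i) = f i ^ q := if_neg hf
      _ ≤ (M * g j) ^ q := ENNReal.rpow_le_rpow h2 hq
      _ = (M : ℝ≥0∞) ^ q * g j ^ q := ENNReal.mul_rpow_of_nonneg _ _ hq
      _ = (M : ℝ≥0∞) ^ q * (if R i j then momentPow q (g j) else 0) := by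
        rw [if_pos (by simpa using hj), momentPow, if_neg hg]
      _ ≤ _ := by gcongr; exact ENNReal.le_tsum j
  calc ∑' i, momentPow q (f i)
      ≤ ∑' i, (M : ℝ≥0∞) ^ q * ∑' j, if R i j then momentPow q (g j) else 0 :=
        ENNReal.tsum_le_tsum key
    _ = (M : ℝ≥0∞) ^ q * ∑' j, ∑' i, if R i j then momentPow q (g j) else 0 := by
        rw [ENNReal.tsum_mul_left, ENNReal.tsum_comm]
    _ ≤ (M : ℝ≥0∞) ^ q * ∑' j, L * momentPow q (g j) := by
        gcongr with j
        exact tsum_ite_const_le (hL j) _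
    _ = _ := by rw [ENNReal.tsum_mul_left, mul_assoc]

/-- The extended-real moment sum on the line. -/
noncomputable def eDq1 (ν : Measure ℝ) (δ q : ℝ) : ℝ≥0∞ :=
  ∑' k : ℤ, momentPow q (ν (meshCube1 δ k))

/-- The extended-real moment sum on the plane. -/
noncomputable def eDq2 (ν : Measure (ℝ × ℝ)) (δ q : ℝ) : ℝ≥0∞ :=
  ∑' k : ℤ × ℤ, momentPow q (ν (meshCube2 δ k))

lemma toReal_momentPow (q : ℝ) (x : ℝ≥0∞) :
    (momentPow q x).toReal = if x = 0 then 0 else x.toReal ^ q := by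
  unfold momentPow
  split_ifs
  · simp
  · rw [ENNReal.toReal_rpow]

lemma toReal_eDq1 (ν : Measure ℝ) [IsFiniteMeasure ν] (δ : ℝ) {q : ℝ} (hq : 0 ≤ q) :
    (eDq1 ν δ q).toReal = Dq1 ν δ q := by
  unfold eDq1 Dq1
  rw [ENNReal.tsum_toReal_eq fun k => momentPow_ne_top hq (measure_ne_top ν _)]
  simp only [toReal_momentPow]

lemma toReal_eDq2 (ν : Measure (ℝ × ℝ)) [IsFiniteMeasure ν] (δ : ℝ) {q : ℝ} (hq : 0 ≤ q) :
    (eDq2 ν δ q).toReal = Dq2 ν δ q := by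
  unfold eDq2 Dq2
  rw [ENNReal.tsum_toReal_eq fun k => momentPow_ne_top hq (measure_ne_top ν _)]
  simp only [toReal_momentPow]

end Moment

section Mesh

lemma exists_mem_meshCube1 {δ : ℝ} (hδ : 0 < δ) (x : ℝ) : ∃ k : ℤ, x ∈ meshCube1 δ k := by
  refine ⟨⌊x / δ⌋, ?_, ?_⟩
  · rw [← le_div_iff₀ hδ]; exact Int.floor_le _
  · rw [← div_le_iff₀ hδ]; exact (Int.lt_floor_add_one _).le

lemma exists_mem_meshCube2 {δ : ℝ} (hδ : 0 < δ) (z : ℝ × ℝ) :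
    ∃ k : ℤ × ℤ, z ∈ meshCube2 δ k := by
  obtain ⟨k, hk⟩ := exists_mem_meshCube1 hδ z.1
  obtain ⟨l, hl⟩ := exists_mem_meshCube1 hδ z.2
  exact ⟨(k, l), hk, hl⟩

lemma measurableSet_meshCube1 (δ : ℝ) (k : ℤ) : MeasurableSet (meshCube1 δ k) :=
  measurableSet_Icc

lemma measurableSet_meshCube2 (δ : ℝ) (k : ℤ × ℤ) : MeasurableSet (meshCube2 δ k) :=
  measurableSet_Icc.prod measurableSet_Icc

lemma abs_sub_le_of_mem_meshCube1 {δ x y : ℝ} {k : ℤ} (hx : x ∈ meshCube1 δ k)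
    (hy : y ∈ meshCube1 δ k) : |x - y| ≤ δ := by
  obtain ⟨h1, h2⟩ := hx
  obtain ⟨h3, h4⟩ := hy
  rw [abs_le]
  constructor <;> linarith

/-- Mesh intervals containing points at distance at most `δ` have indices differing by at
most two. -/
lemma index_le_of_mem_meshCube1 {δ x y : ℝ} {k l : ℤ} (hδ : 0 < δ) (hx : x ∈ meshCube1 δ k)
    (hy : y ∈ meshCube1 δ l) (hxy : |x - y| ≤ δ) : k ≤ l + 2 := by
  have h1 := hx.1
  have h2 := hy.2
  have h3 := (abs_le.1 hxy).2
  have : (k : ℝ) * δ ≤ (l + 2) * δ := by linarith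
  exact_mod_cast le_of_mul_le_mul_right this hδ

lemma encard_le_five {T : Set ℤ} (hT : ∀ k ∈ T, ∀ l ∈ T, k ≤ l + 2) : T.encard ≤ 5 := by
  rcases T.eq_empty_or_nonempty with rfl | ⟨k, hk⟩
  · simp
  · have hsub : T ⊆ (Finset.Icc (k - 2) (k + 2) : Finset ℤ) := by
      intro l hl
      have h1 := hT k hk l hl
      have h2 := hT l hl k hk
      simp only [Finset.coe_Icc, Set.mem_Icc]
      omega
    refine (Set.encard_le_encard hsub).trans ?_
    rw [Set.encard_coe_eq_coe_finsetCard, Int.card_Icc]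
    have : (k + 2 + 1 - (k - 2)).toNat = 5 := by omega
    rw [this]; norm_num

lemma encard_le_twentyfive {T : Set (ℤ × ℤ)}
    (hT : ∀ k ∈ T, ∀ l ∈ T, k.1 ≤ l.1 + 2 ∧ k.2 ≤ l.2 + 2) : T.encard ≤ 25 := by
  have hsub : T ⊆ (Prod.fst '' T) ×ˢ (Prod.snd '' T) := fun k hk => ⟨⟨k, hk, rfl⟩, ⟨k, hk, rfl⟩⟩
  refine (Set.encard_le_encard hsub).trans ?_
  rw [Set.encard_prod]
  have h1 : (Prod.fst '' T).encard ≤ 5 := encard_le_five (by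
    rintro _ ⟨k, hk, rfl⟩ _ ⟨l, hl, rfl⟩
    exact (hT k hk l hl).1)
  have h2 : (Prod.snd '' T).encard ≤ 5 := encard_le_five (by
    rintro _ ⟨k, hk, rfl⟩ _ ⟨l, hl, rfl⟩
    exact (hT k hk l hl).2)
  calc _ ≤ (5 : ℕ∞) * 5 := mul_le_mul' h1 h2
    _ = 25 := by norm_num

end Mesh

/-- A diagonal planar system `z ↦ (m_i z₁ + s_i, n_i z₂ + t_i)` satisfying the rectangular open
set condition, with `a_i = |m_i|`, `b_i = |n_i|`, together with a self-affine measure. -/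
structure DiagSystem (N : ℕ) where
  a : Fin N → ℝ
  b : Fin N → ℝ
  m : Fin N → ℝ
  n : Fin N → ℝ
  tr : Fin N → ℝ × ℝ
  p : Fin N → ℝ
  μ : Measure (ℝ × ℝ)
  ha : ∀ i, a i ∈ Ioo (0 : ℝ) 1
  hb : ∀ i, b i ∈ Ioo (0 : ℝ) 1
  hm : ∀ i, |m i| = a i
  hn : ∀ i, |n i| = b i
  mapsTo_sq : ∀ i, MapsTo (fun z : ℝ × ℝ => (m i * z.1 + (tr i).1, n i * z.2 + (tr i).2))
    (Ioo (0 : ℝ) 1 ×ˢ Ioo (0 : ℝ) 1) (Ioo (0 : ℝ) 1 ×ˢ Ioo (0 : ℝ) 1)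
  disjoint_sq : ∀ i j, i ≠ j →
    Disjoint ((fun z : ℝ × ℝ => (m i * z.1 + (tr i).1, n i * z.2 + (tr i).2)) ''
        (Ioo (0 : ℝ) 1 ×ˢ Ioo (0 : ℝ) 1))
      ((fun z : ℝ × ℝ => (m j * z.1 + (tr j).1, n j * z.2 + (tr j).2)) ''
        (Ioo (0 : ℝ) 1 ×ˢ Ioo (0 : ℝ) 1))
  hp : ∀ i, 0 < p i
  hp1 : ∑ i, p i = 1
  isProb : IsProbabilityMeasure μ
  invariant : μ = ∑ i, ENNReal.ofReal (p i) •
    μ.map (fun z : ℝ × ℝ => (m i * z.1 + (tr i).1, n i * z.2 + (tr i).2))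

/-- A finite complete prefix-free set of words. -/
inductive Cut (N : ℕ) : Finset (List (Fin N)) → Prop
  | nil : Cut N {[]}
  | node (f : Fin N → Finset (List (Fin N))) (hf : ∀ i, Cut N (f i)) :
      Cut N (Finset.univ.biUnion fun i => (f i).image (List.cons i))

lemma sum_node {N : ℕ} {M : Type*} [AddCommMonoid M] (f : Fin N → Finset (List (Fin N)))
    (G : List (Fin N) → M) :
    ∑ w ∈ Finset.univ.biUnion (fun i => (f i).image (List.cons i)), G w =
      ∑ i, ∑ w ∈ f i, G (i :: w) := by
  rw [Finset.sum_biUnion]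
  · refine Finset.sum_congr rfl fun i _ => ?_
    rw [Finset.sum_image]
    intro w _ w' _ h
    exact (List.cons.inj h).2
  · intro i _ j _ hij
    rw [Function.onFun, Finset.disjoint_left]
    intro w hw hw'
    obtain ⟨v, -, rfl⟩ := Finset.mem_image.1 hw
    obtain ⟨v', -, h⟩ := Finset.mem_image.1 hw'
    exact hij (List.cons.inj h).1.symm

lemma Cut.sum_prod_eq_one {N : ℕ} {K : Finset (List (Fin N))} (hK : Cut N K) {g : Fin N → ℝ}
    (hg : ∑ i, g i = 1) : ∑ w ∈ K, (w.map g).prod = 1 := by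
  induction hK with
  | nil => simp
  | node f hf ih =>
    rw [sum_node]
    simp only [List.map_cons, List.prod_cons, ← Finset.mul_sum, ih, mul_one, hg]

lemma Cut.sum_prod_le_one {N : ℕ} {K : Finset (List (Fin N))} (hK : Cut N K) {g : Fin N → ℝ}
    (hg0 : ∀ i, 0 ≤ g i) (hg : ∑ i, g i ≤ 1) : ∑ w ∈ K, (w.map g).prod ≤ 1 := by
  induction hK with
  | nil => simp
  | node f hf ih =>
    rw [sum_node]
    simp only [List.map_cons, List.prod_cons, ← Finset.mul_sum]
    exact (Finset.sum_le_sum fun i _ => mul_le_of_le_one_right (hg0 i) (ih i)).trans hg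

lemma prod_map_rpow {N : ℕ} {g : Fin N → ℝ} (hg : ∀ i, 0 ≤ g i) (x : ℝ) (w : List (Fin N)) :
    (w.map fun i => g i ^ x).prod = (w.map g).prod ^ x := by
  induction w with
  | nil => simp
  | cons i w ih =>
    simp only [List.map_cons, List.prod_cons, ih]
    rw [Real.mul_rpow (hg i) (List.prod_nonneg (by simp; intro j _; exact hg j))]

lemma prod_map_pos {N : ℕ} {g : Fin N → ℝ} (hg : ∀ i, 0 < g i) (w : List (Fin N)) :
    0 < (w.map g).prod := List.prod_pos (by simp; intro j _; exact hg j)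

lemma prod_map_le_one {N : ℕ} {g : Fin N → ℝ} (hg : ∀ i, g i ∈ Ioo (0 : ℝ) 1)
    (w : List (Fin N)) : (w.map g).prod ≤ 1 := by
  induction w with
  | nil => simp
  | cons i w ih =>
    simp only [List.map_cons, List.prod_cons]
    exact mul_le_one₀ (hg i).2.le (prod_map_pos (fun i => (hg i).1) w).le ih

/-- Existence of cuts whose shorter sides are comparable to `δ`. -/
lemma exists_cut_aux {N : ℕ} {a b : Fin N → ℝ} {r ρ δ : ℝ} (ha : ∀ i, a i ∈ Ioo (0 : ℝ) 1)
    (hb : ∀ i, b i ∈ Ioo (0 : ℝ) 1)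
    (hra : ∀ i, r ≤ a i) (hrb : ∀ i, r ≤ b i) (haρ : ∀ i, a i ≤ ρ) (hbρ : ∀ i, b i ≤ ρ)
    (hδ : 0 < δ) (n : ℕ) : ∀ c d : ℝ, 0 < c → 0 < d → r * δ ≤ c → r * δ ≤ d →
      ρ ^ n * min c d ≤ δ →
      ∃ K, Cut N K ∧ ∀ w ∈ K, r * δ ≤ c * (w.map a).prod ∧ r * δ ≤ d * (w.map b).prod ∧
        min (c * (w.map a).prod) (d * (w.map b).prod) ≤ δ := by
  induction n with
  | zero =>
    intro c d _ _ hrc hrd h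
    exact ⟨_, Cut.nil, by simpa using ⟨hrc, hrd, by simpa using h⟩⟩
  | succ n ih =>
    intro c d hc hd hrc hrd h
    by_cases hmin : min c d ≤ δ
    · exact ⟨_, Cut.nil, by simpa using ⟨hrc, hrd, by simpa using hmin⟩⟩
    push Not at hmin
    have hδc : δ < c := hmin.trans_le (min_le_left _ _)
    have hδd : δ < d := hmin.trans_le (min_le_right _ _)
    have hstep : ∀ i, ∃ K, Cut N K ∧ ∀ w ∈ K, r * δ ≤ c * a i * (w.map a).prod ∧
        r * δ ≤ d * b i * (w.map b).prod ∧
        min (c * a i * (w.map a).prod) (d * b i * (w.map b).prod) ≤ δ := by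
      intro i
      have hρ : 0 < ρ := (ha i).1.trans_le (haρ i)
      refine ih (c * a i) (d * b i) (mul_pos hc (ha i).1) (mul_pos hd (hb i).1) ?_ ?_ ?_
      · nlinarith [hra i, (ha i).1]
      · nlinarith [hrb i, (hb i).1]
      · refine le_trans ?_ h
        have : min (c * a i) (d * b i) ≤ ρ * min c d := by
          rw [← mul_min_of_nonneg c d hρ.le |>.symm]
          apply min_le_min
          · nlinarith [haρ i]
          · nlinarith [hbρ i]
        calc ρ ^ n * min (c * a i) (d * b i) ≤ ρ ^ n * (ρ * min c d) := by gcongr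
          _ = ρ ^ (n + 1) * min c d := by ring
    choose f hf hfK using hstep
    refine ⟨_, Cut.node f hf, ?_⟩
    intro w hw
    simp only [Finset.mem_biUnion, Finset.mem_univ, true_and, Finset.mem_image] at hw
    obtain ⟨i, v, hv, rfl⟩ := hw
    simpa [mul_assoc] using hfK i v hv

lemma exists_ratio_bounds {N : ℕ} {a b : Fin N → ℝ} (ha : ∀ i, a i ∈ Ioo (0 : ℝ) 1)
    (hb : ∀ i, b i ∈ Ioo (0 : ℝ) 1) :
    ∃ r ρ : ℝ, 0 < r ∧ r ≤ 1 ∧ 0 < ρ ∧ ρ < 1 ∧ (∀ i, r ≤ a i) ∧ (∀ i, r ≤ b i) ∧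
      (∀ i, a i ≤ ρ) ∧ (∀ i, b i ≤ ρ) := by
  have hfin : (range a ∪ range b ∪ {1 / 2}).Finite :=
    ((finite_range a).union (finite_range b)).union (finite_singleton _)
  have hne : (range a ∪ range b ∪ {1 / 2} : Set ℝ).Nonempty := ⟨1 / 2, by simp⟩
  have hsub : ∀ x ∈ (range a ∪ range b ∪ {1 / 2} : Set ℝ), x ∈ Ioo (0 : ℝ) 1 := by
    rintro x ((⟨i, rfl⟩ | ⟨i, rfl⟩) | rfl)
    · exact ha i
    · exact hb i
    · norm_num
  obtain ⟨r, hr, hrmin⟩ := Set.exists_min_image _ id hfin hne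
  obtain ⟨ρ, hρ, hρmax⟩ := Set.exists_max_image _ id hfin hne
  exact ⟨r, ρ, (hsub r hr).1, (hsub r hr).2.le, (hsub ρ hρ).1, (hsub ρ hρ).2,
    fun i => hrmin _ (by simp), fun i => hrmin _ (by simp), fun i => hρmax _ (by simp),
    fun i => hρmax _ (by simp)⟩

lemma exists_cut {N : ℕ} {a b : Fin N → ℝ} (ha : ∀ i, a i ∈ Ioo (0 : ℝ) 1)
    (hb : ∀ i, b i ∈ Ioo (0 : ℝ) 1) :
    ∃ r : ℝ, 0 < r ∧ r ≤ 1 ∧ ∀ δ : ℝ, 0 < δ → δ ≤ 1 → ∃ K, Cut N K ∧ ∀ w ∈ K,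
      r * δ ≤ (w.map a).prod ∧ r * δ ≤ (w.map b).prod ∧
        min (w.map a).prod (w.map b).prod ≤ δ := by
  obtain ⟨r, ρ, hr0, hr1, hρ0, hρ1, hra, hrb, haρ, hbρ⟩ := exists_ratio_bounds ha hb
  refine ⟨r, hr0, hr1, fun δ hδ hδ1 => ?_⟩
  obtain ⟨n, hn⟩ := exists_pow_lt_of_lt_one hδ hρ1
  have := exists_cut_aux ha hb hra hrb haρ hbρ hδ n 1 1 one_pos one_pos
    (mul_le_one₀ hr1 hδ.le hδ1) (mul_le_one₀ hr1 hδ.le hδ1) (by simpa using hn.le)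
  simpa using this

lemma exists_Ioo_subset_image {m s y z ℓ : ℝ} (hm : m ≠ 0) (hz : z ∈ Icc (0 : ℝ) 1)
    (hy : m * z + s = y) (hℓ : ℓ ≤ |m|) (hℓ0 : 0 ≤ ℓ) :
    ∃ u, y - ℓ ≤ u ∧ u ≤ y ∧ Ioo u (u + ℓ) ⊆ (fun x => m * x + s) '' Ioo 0 1 := by
  obtain ⟨hz0, hz1⟩ := hz
  rcases hm.lt_or_gt with hneg | hpos
  · rw [abs_of_neg hneg] at hℓ
    refine ⟨max (m + s) (y - ℓ), le_max_right _ _, max_le (by nlinarith) (by linarith), ?_⟩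
    rintro v ⟨hv1, hv2⟩
    have e1 : m + s < v := (le_max_left _ _).trans_lt hv1
    have e2 : v < s := by
      rcases max_cases (m + s) (y - ℓ) with h | h
      · linarith [h.1]
      · nlinarith [h.1]
    refine ⟨(v - s) / m, ⟨div_pos_of_neg_of_neg (by linarith) hneg, ?_⟩, ?_⟩
    · rw [div_lt_one_of_neg hneg]; linarith
    · simp only; field_simp; ring
  · rw [abs_of_pos hpos] at hℓ
    refine ⟨max s (y - ℓ), le_max_right _ _, max_le (by nlinarith) (by linarith), ?_⟩
    rintro v ⟨hv1, hv2⟩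
    have e1 : s < v := (le_max_left _ _).trans_lt hv1
    have e2 : v < m + s := by
      rcases max_cases s (y - ℓ) with h | h
      · linarith [h.1]
      · nlinarith [h.1]
    refine ⟨(v - s) / m, ⟨div_pos (by linarith) hpos, ?_⟩, ?_⟩
    · rw [div_lt_one hpos]; linarith
    · simp only; field_simp; ring

namespace DiagSystem

variable {N : ℕ} (S : DiagSystem N)

/-- The affine maps of the system. -/
def ψ (i : Fin N) (z : ℝ × ℝ) : ℝ × ℝ :=
  (S.m i * z.1 + (S.tr i).1, S.n i * z.2 + (S.tr i).2)

/-- The composition of the maps along a word. -/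
def wordMap : List (Fin N) → ℝ × ℝ → ℝ × ℝ
  | [] => id
  | i :: w => S.ψ i ∘ wordMap w

/-- Width of the rectangle of a word. -/
noncomputable def width (w : List (Fin N)) : ℝ := (w.map S.a).prod

/-- Height of the rectangle of a word. -/
noncomputable def height (w : List (Fin N)) : ℝ := (w.map S.b).prod

/-- Probability of a word. -/
noncomputable def prob (w : List (Fin N)) : ℝ := (w.map S.p).prod

lemma width_pos (w : List (Fin N)) : 0 < S.width w := prod_map_pos (fun i => (S.ha i).1) w
lemma height_pos (w : List (Fin N)) : 0 < S.height w := prod_map_pos (fun i => (S.hb i).1) w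
lemma prob_pos (w : List (Fin N)) : 0 < S.prob w := prod_map_pos S.hp w
lemma width_le_one (w : List (Fin N)) : S.width w ≤ 1 := prod_map_le_one S.ha w
lemma height_le_one (w : List (Fin N)) : S.height w ≤ 1 := prod_map_le_one S.hb w

/-- The open unit square. -/
def sq : Set (ℝ × ℝ) := Ioo (0 : ℝ) 1 ×ˢ Ioo (0 : ℝ) 1

/-- The closed unit square. -/
def csq : Set (ℝ × ℝ) := Icc (0 : ℝ) 1 ×ˢ Icc (0 : ℝ) 1

lemma continuous_ψ (i : Fin N) : Continuous (S.ψ i) := by unfold ψ; fun_prop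

lemma m_ne_zero (i : Fin N) : S.m i ≠ 0 := by
  rw [← abs_pos, S.hm]; exact (S.ha i).1

lemma n_ne_zero (i : Fin N) : S.n i ≠ 0 := by
  rw [← abs_pos, S.hn]; exact (S.hb i).1

lemma ψ_injective (i : Fin N) : Function.Injective (S.ψ i) := by
  rintro ⟨x, y⟩ ⟨x', y'⟩ h
  simpa [ψ, S.m_ne_zero i, S.n_ne_zero i] using h

lemma mapsTo_csq (i : Fin N) : MapsTo (S.ψ i) csq csq := by
  have h := (S.mapsTo_sq i).closure (S.continuous_ψ i)
  rwa [closure_prod_eq, closure_Ioo zero_ne_one] at h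

lemma wordMap_eq (w : List (Fin N)) (z : ℝ × ℝ) :
    S.wordMap w z = ((w.map S.m).prod * z.1 + (S.wordMap w 0).1,
      (w.map S.n).prod * z.2 + (S.wordMap w 0).2) := by
  induction w with
  | nil => simp [wordMap]
  | cons i w ih =>
    simp only [wordMap, Function.comp_apply, ψ, List.map_cons, List.prod_cons]
    rw [ih]
    ext <;> ring

lemma abs_prod_m (w : List (Fin N)) : |(w.map S.m).prod| = S.width w := by
  unfold width
  induction w with
  | nil => simp
  | cons i w ih => simp [abs_mul, S.hm, ih]

lemma abs_prod_n (w : List (Fin N)) : |(w.map S.n).prod| = S.height w := by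
  unfold height
  induction w with
  | nil => simp
  | cons i w ih => simp [abs_mul, S.hn, ih]

lemma abs_wordMap_fst (w : List (Fin N)) (z z' : ℝ × ℝ) :
    |(S.wordMap w z).1 - (S.wordMap w z').1| = S.width w * |z.1 - z'.1| := by
  rw [S.wordMap_eq w z, S.wordMap_eq w z', ← abs_prod_m, ← abs_mul]
  congr 1; simp only; ring

lemma abs_wordMap_snd (w : List (Fin N)) (z z' : ℝ × ℝ) :
    |(S.wordMap w z).2 - (S.wordMap w z').2| = S.height w * |z.2 - z'.2| := by
  rw [S.wordMap_eq w z, S.wordMap_eq w z', ← abs_prod_n, ← abs_mul]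
  congr 1; simp only; ring

lemma wordMap_image_sq_subset (w : List (Fin N)) : S.wordMap w '' sq ⊆ sq := by
  induction w with
  | nil => simp [wordMap]
  | cons i w ih =>
    rw [wordMap, image_comp]
    exact (image_mono ih).trans (S.mapsTo_sq i).image_subset

lemma disjoint_wordMap {K : Finset (List (Fin N))} (hK : Cut N K) :
    ∀ w ∈ K, ∀ w' ∈ K, w ≠ w' → Disjoint (S.wordMap w '' sq) (S.wordMap w' '' sq) := by
  induction hK with
  | nil => simp
  | node f hf ih =>
    intro w hw w' hw' hne
    simp only [Finset.mem_biUnion, Finset.mem_univ, true_and, Finset.mem_image] at hw hw'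
    obtain ⟨i, v, hv, rfl⟩ := hw
    obtain ⟨j, v', hv', rfl⟩ := hw'
    rw [wordMap, wordMap, image_comp, image_comp]
    by_cases hij : i = j
    · subst hij
      exact (disjoint_image_iff (S.ψ_injective i)).2 (ih i v hv v' hv' (by simpa using hne))
    · exact (S.disjoint_sq i j hij).mono (image_mono (S.wordMap_image_sq_subset v))
        (image_mono (S.wordMap_image_sq_subset v'))

lemma measure_eq_sum (A : Set (ℝ × ℝ)) (hA : MeasurableSet A) :
    S.μ A = ∑ i, ENNReal.ofReal (S.p i) * S.μ (S.ψ i ⁻¹' A) := by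
  conv_lhs => rw [S.invariant]
  simp only [Measure.coe_finsetSum, Finset.sum_apply, Measure.smul_apply, smul_eq_mul]
  refine Finset.sum_congr rfl fun i _ => ?_
  exact congrArg _ (Measure.map_apply (S.continuous_ψ i).measurable hA)

lemma measure_eq_sum_cut {K : Finset (List (Fin N))} (hK : Cut N K) :
    ∀ A : Set (ℝ × ℝ), MeasurableSet A →
      S.μ A = ∑ w ∈ K, ENNReal.ofReal (S.prob w) * S.μ (S.wordMap w ⁻¹' A) := by
  induction hK with
  | nil => intro A _; simp [prob, wordMap]
  | node f hf ih =>
    intro A hA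
    rw [sum_node, S.measure_eq_sum A hA]
    refine Finset.sum_congr rfl fun i _ => ?_
    rw [ih i _ ((S.continuous_ψ i).measurable hA), Finset.mul_sum]
    refine Finset.sum_congr rfl fun w _ => ?_
    rw [← mul_assoc, ← ENNReal.ofReal_mul (S.hp i).le]
    simp [prob, wordMap, preimage_comp]

lemma card_meeting_le {K : Finset (List (Fin N))} (hK : Cut N K) {r δ : ℝ} (hr : 0 < r)
    (hr1 : r ≤ 1) (hδ : 0 < δ)
    (hw : ∀ w ∈ K, r * δ ≤ S.width w ∧ r * δ ≤ S.height w) (k : ℤ × ℤ) :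
    ((K.filter fun w => ∃ z ∈ csq, S.wordMap w z ∈ meshCube2 δ k).card : ℝ) * r ^ 2 ≤ 9 := by
  set W := K.filter fun w => ∃ z ∈ csq, S.wordMap w z ∈ meshCube2 δ k with hW
  set ℓ := r * δ with hℓ
  have hℓ0 : 0 < ℓ := mul_pos hr hδ
  have hℓδ : ℓ ≤ δ := mul_le_of_le_one_left hδ.le hr1
  set x₀ := (k.1 : ℝ) * δ - δ
  set y₀ := (k.2 : ℝ) * δ - δ
  have hbox : ∀ w ∈ W, ∃ u v : ℝ, Ioo u (u + ℓ) ×ˢ Ioo v (v + ℓ) ⊆ S.wordMap w '' sq ∧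
      Ioo u (u + ℓ) ×ˢ Ioo v (v + ℓ) ⊆ Ioo x₀ (x₀ + 3 * δ) ×ˢ Ioo y₀ (y₀ + 3 * δ) := by
    intro w hwW
    obtain ⟨hwK, z, hz, hzk⟩ := Finset.mem_filter.1 hwW
    have h1 := hw w hwK
    rw [S.wordMap_eq] at hzk
    obtain ⟨u, hu1, hu2, hu3⟩ := exists_Ioo_subset_image (m := (w.map S.m).prod)
      (by rw [← abs_pos, abs_prod_m]; exact S.width_pos w) hz.1 rfl
      (by rw [abs_prod_m]; exact h1.1) hℓ0.le (s := (S.wordMap w 0).1)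
    obtain ⟨v, hv1, hv2, hv3⟩ := exists_Ioo_subset_image (m := (w.map S.n).prod)
      (by rw [← abs_pos, abs_prod_n]; exact S.height_pos w) hz.2 rfl
      (by rw [abs_prod_n]; exact h1.2) hℓ0.le (s := (S.wordMap w 0).2)
    obtain ⟨⟨hk1, hk2⟩, hk3, hk4⟩ := hzk
    simp only at hk1 hk2 hk3 hk4
    refine ⟨u, v, ?_, ?_⟩
    · rintro ⟨x, y⟩ ⟨hx, hy⟩
      obtain ⟨x', hx', hx2⟩ := hu3 hx
      obtain ⟨y', hy', hy2⟩ := hv3 hy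
      refine ⟨(x', y'), ⟨hx', hy'⟩, ?_⟩
      rw [S.wordMap_eq]
      exact Prod.ext hx2 hy2
    · refine prod_mono (Ioo_subset_Ioo ?_ ?_) (Ioo_subset_Ioo ?_ ?_) <;> simp only [x₀, y₀] <;>
        linarith
  choose! u v huv hsub using hbox
  have hvol : ∀ x y s : ℝ, 0 ≤ s → (volume : Measure (ℝ × ℝ)) (Ioo x (x + s) ×ˢ Ioo y (y + s)) =
      ENNReal.ofReal (s ^ 2) := by
    intro x y s hs
    rw [Measure.volume_eq_prod, Measure.prod_prod, Real.volume_Ioo, Real.volume_Ioo,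
      ← ENNReal.ofReal_mul (by linarith)]
    congr 1; ring
  have hmeas := measure_biUnion_finset (μ := (volume : Measure (ℝ × ℝ))) (s := W)
    (f := fun w => Ioo (u w) (u w + ℓ) ×ˢ Ioo (v w) (v w + ℓ)) (by
      intro w hw1 w' hw2 hne
      exact (S.disjoint_wordMap hK w (Finset.mem_filter.1 hw1).1 w' (Finset.mem_filter.1 hw2).1
        hne).mono (huv w hw1) (huv w' hw2))
    (fun w _ => measurableSet_Ioo.prod measurableSet_Ioo)
  have hle := measure_mono (μ := (volume : Measure (ℝ × ℝ))) (iUnion₂_subset hsub)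
  rw [hmeas, hvol _ _ _ (by linarith)] at hle
  simp only [hvol _ _ ℓ hℓ0.le, Finset.sum_const, nsmul_eq_mul] at hle
  rw [← ENNReal.ofReal_natCast, ← ENNReal.ofReal_mul (by positivity),
    ENNReal.ofReal_le_ofReal_iff (by positivity)] at hle
  have h3 : ((W.card : ℝ) * r ^ 2) * δ ^ 2 ≤ 9 * δ ^ 2 := by
    calc _ = (W.card : ℝ) * ℓ ^ 2 := by rw [hℓ]; ring
      _ ≤ _ := hle
      _ = _ := by ring
  exact le_of_mul_le_mul_right h3 (by positivity)

end DiagSystem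

section LineMoments

open scoped ENNReal

lemma encard_meshCube1_meeting {r₀ δ : ℝ} (hr₀ : 0 < r₀) (hδ : r₀ ≤ δ) :
    {k : ℤ | (meshCube1 δ k ∩ Icc 0 1).Nonempty}.encard ≤ (⌊1 / r₀⌋₊ + 2 : ℕ) := by
  have hδ0 : 0 < δ := hr₀.trans_le hδ
  have hsub : {k : ℤ | (meshCube1 δ k ∩ Icc 0 1).Nonempty} ⊆
      (Finset.Icc (-1) (⌊1 / r₀⌋₊ : ℤ) : Finset ℤ) := by
    rintro k ⟨x, ⟨h1, h2⟩, h3, h4⟩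
    simp only [Finset.coe_Icc, Set.mem_Icc]
    constructor
    · have : 0 ≤ ((k : ℝ) + 1) * δ := h3.trans h2
      have := nonneg_of_mul_nonneg_left this hδ0
      have : (-1 : ℝ) ≤ k := by linarith
      exact_mod_cast this
    · have h5 : (k : ℝ) ≤ 1 / r₀ := by
        have : (k : ℝ) ≤ 1 / δ := by rw [le_div_iff₀ hδ0]; linarith
        exact this.trans (one_div_le_one_div_of_le hr₀ hδ)
      rw [Int.natCast_floor_eq_floor (by positivity)]
      exact Int.le_floor.2 h5
  refine (Set.encard_le_encard hsub).trans ?_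
  rw [Set.encard_coe_eq_coe_finsetCard, Int.card_Icc]
  have : ((⌊1 / r₀⌋₊ : ℤ) + 1 - (-1)).toNat = ⌊1 / r₀⌋₊ + 2 := by omega
  rw [this]

variable {ν : Measure ℝ} [IsProbabilityMeasure ν] {q : ℝ}

lemma eDq1_le (hq : 0 ≤ q) (hν : ν (Icc 0 1)ᶜ = 0) {r₀ δ : ℝ} (hr₀ : 0 < r₀) (hδ : r₀ ≤ δ) :
    eDq1 ν δ q ≤ (⌊1 / r₀⌋₊ + 2 : ℕ) := by
  have h := tsum_momentPow_le hq (f := fun k : ℤ => ν (meshCube1 δ k)) (g := fun _ : Unit => 1)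
    (fun k _ => (meshCube1 δ k ∩ Icc 0 1).Nonempty) (M := 1) (L := ⌊1 / r₀⌋₊ + 2) ?_ ?_ ?_
  · simpa [eDq1, momentPow] using h
  · intro k
    simp only [tsum_fintype, Finset.univ_unique, Finset.sum_singleton]
    split_ifs with hk
    · exact prob_le_one
    · refine (measure_mono_null (fun x hx hx' => hk ⟨x, hx, hx'⟩) hν).le
  · intro k
    refine (Set.encard_le_encard (Set.subset_univ _)).trans (by simp)
  · exact fun _ => encard_meshCube1_meeting hr₀ hδ

lemma le_eDq1 (hq : 0 ≤ q) (hν : ν (Icc 0 1)ᶜ = 0) {r₀ δ : ℝ} (hr₀ : 0 < r₀) (hδ : r₀ ≤ δ) :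
    1 ≤ ((⌊1 / r₀⌋₊ + 2 : ℕ) : ℝ≥0∞) ^ q * eDq1 ν δ q := by
  have h := tsum_momentPow_le hq (g := fun k : ℤ => ν (meshCube1 δ k)) (f := fun _ : Unit => 1)
    (fun _ k => (meshCube1 δ k ∩ Icc 0 1).Nonempty) (L := 1) (M := ⌊1 / r₀⌋₊ + 2) ?_ ?_ ?_
  · simpa [eDq1, momentPow] using h
  · intro _
    have h1 : ν (Icc 0 1) = 1 := (prob_compl_eq_zero_iff measurableSet_Icc).1 hν
    rw [← h1]
    refine (measure_mono (t := ⋃ k : ℤ, if (meshCube1 δ k ∩ Icc 0 1).Nonempty then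
      meshCube1 δ k else ∅) ?_).trans ((measure_iUnion_le _).trans ?_)
    · intro x hx
      obtain ⟨k, hk⟩ := exists_mem_meshCube1 (hr₀.trans_le hδ) x
      refine mem_iUnion.2 ⟨k, ?_⟩
      rw [if_pos ⟨x, hk, hx⟩]
      exact hk
    · gcongr with k
      split_ifs <;> simp
  · exact fun _ => encard_meshCube1_meeting hr₀ hδ
  · intro k
    refine (Set.encard_le_encard (Set.subset_univ _)).trans (by simp)

lemma eDq1_ne_top (hq : 0 ≤ q) (hν : ν (Icc 0 1)ᶜ = 0) {δ : ℝ} (hδ : 0 < δ) :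
    eDq1 ν δ q ≠ ∞ :=
  ((eDq1_le hq hν hδ le_rfl).trans_lt (ENNReal.natCast_lt_top _)).ne

lemma Dq1_le (hq : 0 ≤ q) (hν : ν (Icc 0 1)ᶜ = 0) {r₀ : ℝ} (hr₀ : 0 < r₀) :
    ∃ C : ℝ, 0 < C ∧ ∀ δ, r₀ ≤ δ → Dq1 ν δ q ≤ C := by
  refine ⟨(⌊1 / r₀⌋₊ + 2 : ℕ), by positivity, fun δ hδ => ?_⟩
  rw [← toReal_eDq1 ν δ hq, ← ENNReal.toReal_natCast]
  exact ENNReal.toReal_mono (ENNReal.natCast_ne_top _) (eDq1_le hq hν hr₀ hδ)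

lemma le_Dq1 (hq : 0 ≤ q) (hν : ν (Icc 0 1)ᶜ = 0) {r₀ : ℝ} (hr₀ : 0 < r₀) :
    ∃ c : ℝ, 0 < c ∧ ∀ δ, r₀ ≤ δ → c ≤ Dq1 ν δ q := by
  refine ⟨(((⌊1 / r₀⌋₊ + 2 : ℕ) : ℝ) ^ q)⁻¹, by positivity, fun δ hδ => ?_⟩
  have h := ENNReal.toReal_mono (ENNReal.mul_ne_top
    (ENNReal.rpow_ne_top_of_nonneg hq (ENNReal.natCast_ne_top _))
    (eDq1_ne_top hq hν (hr₀.trans_le hδ))) (le_eDq1 hq hν hr₀ hδ)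
  rw [ENNReal.toReal_mul, ← ENNReal.toReal_rpow, ENNReal.toReal_natCast, ENNReal.toReal_one,
    toReal_eDq1 ν δ hq] at h
  rw [inv_le_iff_one_le_mul₀' (by positivity)]
  exact h

lemma exists_rpow_le {r₀ R : ℝ} (hr₀ : 0 < r₀) (e : ℝ) :
    ∃ B : ℝ, 0 < B ∧ ∀ r ∈ Icc r₀ R, r ^ e ≤ B := by
  have hc : ContinuousOn (fun r : ℝ => r ^ e) (Icc r₀ R) := fun r hr =>
    (Real.continuousAt_rpow_const r e (Or.inl (hr₀.trans_le hr.1).ne')).continuousWithinAt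
  obtain ⟨B, hB⟩ := isCompact_Icc.bddAbove_image hc
  exact ⟨max B 1, by positivity, fun r hr => (hB ⟨r, hr, rfl⟩).trans (le_max_left _ _)⟩

/-- A uniform form of the existence of the `L^q`-spectrum on the line. -/
lemma HasLq1.bounds (hq : 0 ≤ q) (hν : ν (Icc 0 1)ᶜ = 0) {τ : ℝ} (h : HasLq1 ν q τ) {ε : ℝ}
    (hε : 0 < ε) (R : ℝ) :
    ∃ C : ℝ, 0 < C ∧ ∀ r ∈ Ioc 0 R, Dq1 ν r q ≤ C * r ^ (-τ - ε) ∧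
      r ^ (-τ + ε) ≤ C * Dq1 ν r q := by
  have h1 := h.eventually (Ioo_mem_nhds (sub_lt_self τ hε) (lt_add_of_pos_right τ hε))
  have h2 := h1.and (Ioo_mem_nhdsGT (zero_lt_one (α := ℝ)))
  obtain ⟨r₀, hr₀, hsub⟩ := (mem_nhdsGT_iff_exists_Ioc_subset).1 h2
  have hr₀ : 0 < r₀ := hr₀
  obtain ⟨C₁, hC₁, hD₁⟩ := Dq1_le hq hν hr₀
  obtain ⟨c₂, hc₂, hD₂⟩ := le_Dq1 hq hν hr₀
  obtain ⟨B₁, hB₁, hr₁⟩ := exists_rpow_le (R := R) hr₀ (τ + ε)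
  obtain ⟨B₂, hB₂, hr₂⟩ := exists_rpow_le (R := R) hr₀ (-τ + ε)
  set C := 1 + C₁ * B₁ + B₂ / c₂
  have e1 : 0 < C₁ * B₁ := by positivity
  have e2 : 0 < B₂ / c₂ := by positivity
  refine ⟨C, by positivity, fun r hr => ?_⟩
  have hr0 : 0 < r := hr.1
  rcases le_total r r₀ with hle | hle
  · obtain ⟨⟨hl, hu⟩, -, hr1⟩ := hsub ⟨hr0, hle⟩
    have hlog : 0 < -Real.log r := by linarith [Real.log_neg hr0 hr1]
    obtain ⟨c, hc, hDc⟩ := le_Dq1 hq hν hr0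
    have hD : 0 < Dq1 ν r q := hc.trans_le (hDc r le_rfl)
    rw [lt_div_iff₀ hlog] at hl
    rw [div_lt_iff₀ hlog] at hu
    constructor
    · have : Dq1 ν r q ≤ r ^ (-τ - ε) := by
        rw [Real.rpow_def_of_pos hr0, ← Real.log_le_iff_le_exp hD]
        linarith
      have h3 : 0 < r ^ (-τ - ε) := Real.rpow_pos_of_pos hr0 _
      nlinarith
    · have : r ^ (-τ + ε) ≤ Dq1 ν r q := by
        rw [Real.rpow_def_of_pos hr0, ← Real.le_log_iff_exp_le hD]
        linarith
      nlinarith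
  · constructor
    · have h3 := hr₁ r ⟨hle, hr.2⟩
      have h4 : 0 < r ^ (τ + ε) := Real.rpow_pos_of_pos hr0 _
      have h5 : r ^ (-τ - ε) = (r ^ (τ + ε))⁻¹ := by
        rw [← Real.rpow_neg hr0.le]; congr 1; ring
      rw [h5, ← div_eq_mul_inv, le_div_iff₀ h4]
      calc Dq1 ν r q * r ^ (τ + ε) ≤ C₁ * B₁ := mul_le_mul (hD₁ r hle) h3 h4.le hC₁.le
        _ ≤ C := by simp only [C]; linarith
    · calc r ^ (-τ + ε) ≤ B₂ := hr₂ r ⟨hle, hr.2⟩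
        _ = B₂ / c₂ * c₂ := by field_simp
        _ ≤ C * Dq1 ν r q := mul_le_mul (by simp only [C]; linarith) (hD₂ r hle) hc₂.le
            (by positivity)

end LineMoments

namespace DiagSystem

variable {N : ℕ} (S : DiagSystem N)

/-- The closed unit square enlarged by `R` on all sides. -/
def enlarged (R : ℝ) : Set (ℝ × ℝ) := Icc (-R) (1 + R) ×ˢ Icc (-R) (1 + R)

lemma enlarged_mono {R R' : ℝ} (h : R ≤ R') : enlarged R ⊆ enlarged R' :=
  prod_mono (Icc_subset_Icc (by linarith) (by linarith))
    (Icc_subset_Icc (by linarith) (by linarith))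

lemma measurableSet_enlarged (R : ℝ) : MeasurableSet (enlarged R) :=
  measurableSet_Icc.prod measurableSet_Icc

lemma exists_Icc_abs_sub_le {R x : ℝ} (hx : x ∈ Icc (-R) (1 + R)) (hR : 0 ≤ R) :
    ∃ y ∈ Icc (0 : ℝ) 1, |x - y| ≤ R := by
  obtain ⟨h1, h2⟩ := hx
  refine ⟨max 0 (min x 1), ⟨le_max_left _ _, max_le zero_le_one (min_le_right _ _)⟩, ?_⟩
  rw [abs_le]
  rcases max_cases 0 (min x 1) with h | h <;> rcases min_cases x 1 with h' | h' <;>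
    constructor <;> linarith

lemma mem_Icc_of_abs_sub_le {R x y : ℝ} (hy : y ∈ Icc (0 : ℝ) 1) (h : |x - y| ≤ R) :
    x ∈ Icc (-R) (1 + R) := by
  obtain ⟨h1, h2⟩ := abs_le.1 h
  exact ⟨by linarith [hy.1], by linarith [hy.2]⟩

lemma mapsTo_enlarged {ρ : ℝ} (haρ : ∀ i, S.a i ≤ ρ) (hbρ : ∀ i, S.b i ≤ ρ) {R : ℝ}
    (hR : 0 ≤ R) (i : Fin N) : MapsTo (S.ψ i) (enlarged R) (enlarged (ρ * R)) := by
  rintro ⟨x, y⟩ ⟨hx, hy⟩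
  obtain ⟨x', hx', hxx'⟩ := exists_Icc_abs_sub_le hx hR
  obtain ⟨y', hy', hyy'⟩ := exists_Icc_abs_sub_le hy hR
  obtain ⟨h1, h2⟩ := S.mapsTo_csq i (show (x', y') ∈ csq from ⟨hx', hy'⟩)
  refine ⟨mem_Icc_of_abs_sub_le h1 ?_, mem_Icc_of_abs_sub_le h2 ?_⟩
  · simp only [ψ, add_sub_add_right_eq_sub, ← mul_sub, abs_mul, S.hm]
    exact mul_le_mul (haρ i) hxx' (abs_nonneg _) ((S.ha i).1.le.trans (haρ i))
  · simp only [ψ, add_sub_add_right_eq_sub, ← mul_sub, abs_mul, S.hn]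
    exact mul_le_mul (hbρ i) hyy' (abs_nonneg _) ((S.hb i).1.le.trans (hbρ i))

lemma measure_enlarged_le {ρ : ℝ} (haρ : ∀ i, S.a i ≤ ρ) (hbρ : ∀ i, S.b i ≤ ρ) {R : ℝ}
    (hR : 0 ≤ R) : S.μ (enlarged R) ≤ S.μ (enlarged (ρ * R)) := by
  rw [S.measure_eq_sum _ (measurableSet_enlarged (ρ * R))]
  calc S.μ (enlarged R) = ∑ i, ENNReal.ofReal (S.p i) * S.μ (enlarged R) := by
        rw [← Finset.sum_mul, ← ENNReal.ofReal_sum_of_nonneg fun i _ => (S.hp i).le, S.hp1,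
          ENNReal.ofReal_one, one_mul]
    _ ≤ _ := by
        gcongr with i
        exact S.mapsTo_enlarged haρ hbρ hR i

/-- The self-affine measure is carried by the closed unit square. -/
lemma measure_compl_csq : S.μ csqᶜ = 0 := by
  have := S.isProb
  obtain ⟨r, ρ, -, -, hρ0, hρ1, -, -, haρ, hbρ⟩ := exists_ratio_bounds S.ha S.hb
  have hpow : ∀ (n : ℕ) {R : ℝ}, 0 ≤ R → S.μ (enlarged R) ≤ S.μ (enlarged (ρ ^ n * R)) := by
    intro n
    induction n with
    | zero => intro R _; simp
    | succ n ih =>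
      intro R hR
      refine (ih hR).trans ((S.measure_enlarged_le haρ hbρ (by positivity)).trans ?_)
      rw [pow_succ', mul_assoc]
  have hunion : (⋃ n : ℕ, enlarged (n : ℝ)) = univ := by
    refine eq_univ_of_forall fun z => ?_
    obtain ⟨n, hn⟩ := exists_nat_ge (max |z.1| |z.2|)
    have h1 := abs_le.1 ((le_max_left _ _).trans hn)
    have h2 := abs_le.1 ((le_max_right _ _).trans hn)
    exact mem_iUnion.2 ⟨n, ⟨by linarith, by linarith⟩, by linarith, by linarith⟩
  have hlim := tendsto_measure_iUnion_atTop (μ := S.μ) (s := fun n : ℕ => enlarged (n : ℝ))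
    (fun m n h => enlarged_mono (by exact_mod_cast h))
  rw [hunion, measure_univ] at hlim
  have hone : ∀ R : ℝ, 0 < R → S.μ (enlarged R)ᶜ = 0 := by
    intro R hR
    rw [prob_compl_eq_zero_iff (measurableSet_enlarged R)]
    refine le_antisymm prob_le_one (le_of_tendsto' hlim fun n => ?_)
    obtain ⟨k, hk⟩ := exists_pow_lt_of_lt_one (show 0 < R / (n + 1) by positivity) hρ1
    rw [lt_div_iff₀ (by positivity)] at hk
    refine (hpow k (Nat.cast_nonneg n)).trans (measure_mono (enlarged_mono ?_))
    have : 0 < ρ ^ k := by positivity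
    nlinarith
  have hsub : csqᶜ ⊆ ⋃ n : ℕ, (enlarged (1 / ((n : ℝ) + 1)))ᶜ := by
    intro z hz
    by_contra hcon
    simp only [mem_iUnion, not_exists, mem_compl_iff, not_not] at hcon
    have h0 := tendsto_one_div_add_atTop_nhds_zero_nat (𝕜 := ℝ)
    have hneg : Tendsto (fun n : ℕ => -(1 / ((n : ℝ) + 1))) atTop (nhds 0) := by
      simpa using h0.neg
    have hadd : Tendsto (fun n : ℕ => 1 + 1 / ((n : ℝ) + 1)) atTop (nhds 1) := by
      simpa using h0.const_add 1
    exact hz ⟨⟨le_of_tendsto' hneg fun n => (hcon n).1.1,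
        ge_of_tendsto' hadd fun n => (hcon n).1.2⟩,
      le_of_tendsto' hneg fun n => (hcon n).2.1, ge_of_tendsto' hadd fun n => (hcon n).2.2⟩
  exact measure_mono_null hsub (measure_iUnion_null fun n => hone _ (by positivity))

lemma map_fst_compl : S.μ.map Prod.fst (Icc 0 1)ᶜ = 0 := by
  rw [Measure.map_apply measurable_fst measurableSet_Icc.compl]
  have hsub : Prod.fst ⁻¹' (Icc (0 : ℝ) 1)ᶜ ⊆ csqᶜ := fun z hz h => hz h.1
  exact measure_mono_null hsub S.measure_compl_csq

lemma map_snd_compl : S.μ.map Prod.snd (Icc 0 1)ᶜ = 0 := by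
  rw [Measure.map_apply measurable_snd measurableSet_Icc.compl]
  have hsub : Prod.snd ⁻¹' (Icc (0 : ℝ) 1)ᶜ ⊆ csqᶜ := fun z hz h => hz h.2
  exact measure_mono_null hsub S.measure_compl_csq

end DiagSystem

namespace DiagSystem

open scoped ENNReal

variable {N : ℕ} (S : DiagSystem N)

/-- The coordinate projection along the longest side of the rectangle of a word. -/
noncomputable def axis (w : List (Fin N)) : ℝ × ℝ → ℝ :=
  if S.height w ≤ S.width w then Prod.fst else Prod.snd

/-- The longest side of the rectangle of a word. -/
noncomputable def long (w : List (Fin N)) : ℝ := max (S.width w) (S.height w)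

lemma long_pos (w : List (Fin N)) : 0 < S.long w := lt_max_of_lt_left (S.width_pos w)

lemma measurable_axis (w : List (Fin N)) : Measurable (S.axis w) := by
  unfold axis
  split_ifs
  · exact measurable_fst
  · exact measurable_snd

lemma abs_wordMap_le_of_axis {w : List (Fin N)} {δ : ℝ} {z z' : ℝ × ℝ} (hz : z ∈ csq)
    (hz' : z' ∈ csq) (hδ : min (S.width w) (S.height w) ≤ δ)
    (h : |S.axis w z - S.axis w z'| ≤ δ / S.long w) :
    |(S.wordMap w z).1 - (S.wordMap w z').1| ≤ δ ∧
      |(S.wordMap w z).2 - (S.wordMap w z').2| ≤ δ := by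
  rw [le_div_iff₀ (S.long_pos w)] at h
  have h1 : |z.1 - z'.1| ≤ 1 := by
    rw [abs_le]; constructor <;> linarith [hz.1.1, hz.1.2, hz'.1.1, hz'.1.2]
  have h2 : |z.2 - z'.2| ≤ 1 := by
    rw [abs_le]; constructor <;> linarith [hz.2.1, hz.2.2, hz'.2.1, hz'.2.2]
  have hc := S.width_pos w
  have hd := S.height_pos w
  rw [S.abs_wordMap_fst, S.abs_wordMap_snd]
  unfold axis long at h
  split_ifs at h with hcd
  · rw [max_eq_left hcd] at h
    rw [min_eq_right hcd] at hδ
    exact ⟨by linarith, by nlinarith⟩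
  · push Not at hcd
    rw [max_eq_right hcd.le] at h
    rw [min_eq_left hcd.le] at hδ
    exact ⟨by nlinarith, by linarith⟩

lemma abs_axis_le {w : List (Fin N)} {δ : ℝ} {z z' : ℝ × ℝ}
    (h1 : |(S.wordMap w z).1 - (S.wordMap w z').1| ≤ δ)
    (h2 : |(S.wordMap w z).2 - (S.wordMap w z').2| ≤ δ) :
    |S.axis w z - S.axis w z'| ≤ δ / S.long w := by
  rw [le_div_iff₀ (S.long_pos w)]
  rw [S.abs_wordMap_fst] at h1
  rw [S.abs_wordMap_snd] at h2
  unfold axis long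
  split_ifs with hcd
  · rw [max_eq_left hcd]; linarith
  · push Not at hcd
    rw [max_eq_right hcd.le]; linarith

/-- The mesh square `k` meets the image of the strip of the unit square over the mesh interval
`j` along the longest side of `w`. -/
def Meets (δ : ℝ) (k : ℤ × ℤ) (w : List (Fin N)) (j : ℤ) : Prop :=
  ∃ z ∈ csq, S.axis w z ∈ meshCube1 (δ / S.long w) j ∧ S.wordMap w z ∈ meshCube2 δ k

lemma encard_meets_square_le {δ : ℝ} (hδ : 0 < δ) {w : List (Fin N)}
    (hw : min (S.width w) (S.height w) ≤ δ) (j : ℤ) :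
    {k | S.Meets δ k w j}.encard ≤ 25 := by
  refine encard_le_twentyfive ?_
  rintro k ⟨z, hz, hzj, hzk⟩ l ⟨z', hz', hzj', hzl⟩
  obtain ⟨h1, h2⟩ := S.abs_wordMap_le_of_axis hz hz' hw (abs_sub_le_of_mem_meshCube1 hzj hzj')
  exact ⟨index_le_of_mem_meshCube1 hδ hzk.1 hzl.1 h1, index_le_of_mem_meshCube1 hδ hzk.2 hzl.2 h2⟩

lemma index_le_of_meets {δ : ℝ} (hδ : 0 < δ) {w : List (Fin N)} {k : ℤ × ℤ} {j l : ℤ}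
    (hj : S.Meets δ k w j) (hl : S.Meets δ k w l) : j ≤ l + 2 := by
  obtain ⟨z, -, hzj, hzk⟩ := hj
  obtain ⟨z', -, hzj', hzk'⟩ := hl
  exact index_le_of_mem_meshCube1 (div_pos hδ (S.long_pos w)) hzj hzj'
    (S.abs_axis_le (abs_sub_le_of_mem_meshCube1 hzk.1 hzk'.1)
      (abs_sub_le_of_mem_meshCube1 hzk.2 hzk'.2))

lemma encard_meets_strip_le {K : Finset (List (Fin N))} (hK : Cut N K) {r δ : ℝ} (hr : 0 < r)
    (hr1 : r ≤ 1) (hδ : 0 < δ)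
    (hw : ∀ w ∈ K, r * δ ≤ S.width w ∧ r * δ ≤ S.height w) (k : ℤ × ℤ) :
    {x : K × ℤ | S.Meets δ k x.1 x.2}.encard ≤ (⌊9 / r ^ 2⌋₊ * 5 : ℕ) := by
  set W := K.filter fun w => ∃ z ∈ csq, S.wordMap w z ∈ meshCube2 δ k with hW
  have hcard : W.card ≤ ⌊9 / r ^ 2⌋₊ := by
    refine Nat.le_floor ?_
    rw [le_div_iff₀ (by positivity)]
    exact S.card_meeting_le hK hr hr1 hδ hw k
  have hj : ∀ w : List (Fin N), ∃ j₀ : ℤ, ∀ j, S.Meets δ k w j → j ∈ Icc (j₀ - 2) (j₀ + 2) := by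
    intro w
    by_cases h : ∃ j, S.Meets δ k w j
    · obtain ⟨j₀, hj₀⟩ := h
      refine ⟨j₀, fun j hj => ⟨?_, S.index_le_of_meets hδ hj hj₀⟩⟩
      have := S.index_le_of_meets hδ hj₀ hj
      omega
    · exact ⟨0, fun j hj => (h ⟨j, hj⟩).elim⟩
  choose j₀ hj₀ using hj
  set U : Finset (List (Fin N) × ℤ) :=
    W.biUnion fun w => (Finset.Icc (j₀ w - 2) (j₀ w + 2)).image (Prod.mk w) with hU
  have hUcard : U.card ≤ ⌊9 / r ^ 2⌋₊ * 5 := by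
    refine (Finset.card_biUnion_le_card_mul _ _ 5 fun w _ => ?_).trans
      (Nat.mul_le_mul_right 5 hcard)
    refine Finset.card_image_le.trans ?_
    rw [Int.card_Icc]
    omega
  have hinj : Function.Injective (fun x : K × ℤ => ((x.1 : List (Fin N)), x.2)) := by
    rintro ⟨w, j⟩ ⟨w', j'⟩ h
    simp only [Prod.mk.injEq] at h
    exact Prod.ext (Subtype.ext h.1) h.2
  rw [← hinj.encard_image]
  refine (Set.encard_le_encard (t := (U : Set (List (Fin N) × ℤ))) ?_).trans ?_
  · rintro _ ⟨⟨w, j⟩, hx, rfl⟩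
    have hx : S.Meets δ k w j := hx
    obtain ⟨z, hz, hzj, hzk⟩ := hx
    simp only [hU, hW, Finset.coe_biUnion, Finset.coe_image, mem_iUnion, Finset.coe_filter,
      mem_ofPred_eq]
    exact ⟨w, ⟨w.2, z, hz, hzk⟩, j, by simpa using hj₀ w j ⟨z, hz, hzj, hzk⟩, rfl⟩
  · rw [Set.encard_coe_eq_coe_finsetCard]
    exact_mod_cast hUcard

lemma measure_le_tsum_ite {ι : Type*} [Countable ι] {A : Set (ℝ × ℝ)} {B : ι → Set (ℝ × ℝ)}
    {s : ι → Prop} (h : ∀ z ∈ csq, z ∈ A → ∃ i, s i ∧ z ∈ B i) :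
    S.μ A ≤ ∑' i, if s i then S.μ (B i) else 0 := by
  have hsub : A ⊆ csqᶜ ∪ ⋃ i, if s i then B i else ∅ := by
    intro z hz
    by_cases hc : z ∈ csq
    · obtain ⟨i, hi, hzi⟩ := h z hc hz
      exact Or.inr (mem_iUnion.2 ⟨i, by rwa [if_pos hi]⟩)
    · exact Or.inl hc
  refine (measure_mono hsub).trans ((measure_union_le _ _).trans ?_)
  rw [S.measure_compl_csq, zero_add]
  refine (measure_iUnion_le _).trans ?_
  gcongr with i
  split_ifs <;> simp

lemma tsum_finset_prod (K : Finset (List (Fin N))) (F : List (Fin N) → ℤ → ℝ≥0∞) :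
    ∑' x : K × ℤ, F x.1 x.2 = ∑ w ∈ K, ∑' j, F w j := by
  rw [ENNReal.tsum_prod (f := fun (w : K) j => F w j), tsum_fintype,
    Finset.sum_coe_sort K fun w => ∑' j, F w j]

/-- The moment sum of the projection to the longest side, at the matching scale. -/
noncomputable def sideMoment (q δ : ℝ) (w : List (Fin N)) : ℝ≥0∞ :=
  eDq1 (S.μ.map (S.axis w)) (δ / S.long w) q

lemma tsum_strips (K : Finset (List (Fin N))) (q δ : ℝ) :
    ∑' x : K × ℤ, momentPow q (ENNReal.ofReal (S.prob x.1) *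
        S.μ (S.axis x.1 ⁻¹' meshCube1 (δ / S.long x.1) x.2)) =
      ∑ w ∈ K, ENNReal.ofReal (S.prob w) ^ q * S.sideMoment q δ w := by
  rw [tsum_finset_prod K fun w j => momentPow q (ENNReal.ofReal (S.prob w) *
    S.μ (S.axis w ⁻¹' meshCube1 (δ / S.long w) j))]
  refine Finset.sum_congr rfl fun w _ => ?_
  rw [sideMoment, eDq1, ← ENNReal.tsum_mul_left]
  refine tsum_congr fun j => ?_
  rw [Measure.map_apply (S.measurable_axis w) (measurableSet_meshCube1 _ _), momentPow_mul]
  exact (ENNReal.ofReal_pos.2 (S.prob_pos w)).ne'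

lemma eDq2_le {K : Finset (List (Fin N))} (hK : Cut N K) {r δ q : ℝ} (hq : 0 ≤ q) (hr : 0 < r)
    (hr1 : r ≤ 1) (hδ : 0 < δ)
    (hw : ∀ w ∈ K, r * δ ≤ S.width w ∧ r * δ ≤ S.height w)
    (hmin : ∀ w ∈ K, min (S.width w) (S.height w) ≤ δ) :
    eDq2 S.μ δ q ≤ ((⌊9 / r ^ 2⌋₊ * 5 : ℕ) : ℝ≥0∞) ^ q * (25 : ℕ) *
      ∑ w ∈ K, ENNReal.ofReal (S.prob w) ^ q * S.sideMoment q δ w := by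
  rw [← S.tsum_strips]
  refine tsum_momentPow_le hq (fun k (x : K × ℤ) => S.Meets δ k x.1 x.2) ?_
    (S.encard_meets_strip_le hK hr hr1 hδ hw)
    (fun x => S.encard_meets_square_le hδ (hmin _ x.1.2) _)
  intro k
  rw [S.measure_eq_sum_cut hK _ (measurableSet_meshCube2 δ k),
    tsum_finset_prod K fun w j => if S.Meets δ k w j then ENNReal.ofReal (S.prob w) *
      S.μ (S.axis w ⁻¹' meshCube1 (δ / S.long w) j) else 0]
  refine Finset.sum_le_sum fun w _ => ?_
  have h := S.measure_le_tsum_ite (A := S.wordMap w ⁻¹' meshCube2 δ k)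
    (B := fun j => S.axis w ⁻¹' meshCube1 (δ / S.long w) j) (s := fun j => S.Meets δ k w j)
    fun z hz hzk => by
      obtain ⟨j, hj⟩ := exists_mem_meshCube1 (div_pos hδ (S.long_pos w)) (S.axis w z)
      exact ⟨j, ⟨z, hz, hj, hzk⟩, hj⟩
  refine (mul_le_mul_right h _).trans ?_
  rw [← ENNReal.tsum_mul_left]
  refine ENNReal.tsum_le_tsum fun j => ?_
  split_ifs <;> simp

lemma sum_strips_le {K : Finset (List (Fin N))} (hK : Cut N K) {r δ q : ℝ} (hq : 0 ≤ q)
    (hr : 0 < r) (hr1 : r ≤ 1) (hδ : 0 < δ)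
    (hw : ∀ w ∈ K, r * δ ≤ S.width w ∧ r * δ ≤ S.height w)
    (hmin : ∀ w ∈ K, min (S.width w) (S.height w) ≤ δ) :
    ∑ w ∈ K, ENNReal.ofReal (S.prob w) ^ q * S.sideMoment q δ w ≤
      ((25 : ℕ) : ℝ≥0∞) ^ q * (⌊9 / r ^ 2⌋₊ * 5 : ℕ) * eDq2 S.μ δ q := by
  rw [← S.tsum_strips]
  refine tsum_momentPow_le hq (fun (x : K × ℤ) k => S.Meets δ k x.1 x.2) ?_
    (fun x => S.encard_meets_square_le hδ (hmin _ x.1.2) _)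
    (S.encard_meets_strip_le hK hr hr1 hδ hw)
  rintro ⟨w, j⟩
  have h := S.measure_le_tsum_ite (A := S.axis w ⁻¹' meshCube1 (δ / S.long w) j)
    (B := fun k => S.wordMap w ⁻¹' meshCube2 δ k) (s := fun k => S.Meets δ k w j)
    fun z hz hzj => by
      obtain ⟨k, hk⟩ := exists_mem_meshCube2 hδ (S.wordMap w z)
      exact ⟨k, ⟨z, hz, hzj, hk⟩, hk⟩
  refine (mul_le_mul_right h _).trans ?_
  rw [← ENNReal.tsum_mul_left]
  refine ENNReal.tsum_le_tsum fun k => ?_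
  simp only
  split_ifs
  · rw [S.measure_eq_sum_cut hK _ (measurableSet_meshCube2 δ k)]
    exact Finset.single_le_sum (f := fun w => ENNReal.ofReal (S.prob w) *
      S.μ (S.wordMap w ⁻¹' meshCube2 δ k)) (fun _ _ => zero_le) w.2
  · simp

end DiagSystem

namespace DiagSystem

open scoped ENNReal

variable {N : ℕ} (S : DiagSystem N)

/-- The expected size of the moment sum of the projection to the longest side. -/
noncomputable def sidePower (τA τB δ : ℝ) (w : List (Fin N)) : ℝ :=
  if S.height w ≤ S.width w then (S.width w / δ) ^ τA else (S.height w / δ) ^ τB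

lemma sidePower_pos {τA τB δ : ℝ} (hδ : 0 < δ) (w : List (Fin N)) :
    0 < S.sidePower τA τB δ w := by
  have h1 := S.width_pos w
  have h2 := S.height_pos w
  unfold sidePower
  split_ifs <;> positivity

lemma scaled_moment_bounds {ν : Measure ℝ} {q τ ε δ c C : ℝ} (hε : 0 < ε) (hδ : 0 < δ)
    (hc : 0 < c) (hc1 : c ≤ 1) (hC : 0 < C)
    (h : Dq1 ν (δ / c) q ≤ C * (δ / c) ^ (-τ - ε) ∧ (δ / c) ^ (-τ + ε) ≤ C * Dq1 ν (δ / c) q) :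
    Dq1 ν (δ / c) q ≤ C * δ ^ (-ε) * (c / δ) ^ τ ∧ δ ^ ε * (c / δ) ^ τ ≤ C * Dq1 ν (δ / c) q := by
  have hpos : 0 < δ / c := by positivity
  have hflip : (δ / c) ^ (-τ) = (c / δ) ^ τ := by
    rw [Real.rpow_neg hpos.le, ← Real.inv_rpow hpos.le, inv_div]
  have hle : δ ≤ δ / c := by rw [le_div_iff₀ hc]; nlinarith
  have hT : 0 < (c / δ) ^ τ := by positivity
  constructor
  · refine h.1.trans ?_
    rw [sub_eq_add_neg, Real.rpow_add hpos, hflip, mul_assoc, mul_comm (δ ^ (-ε))]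
    have : (δ / c) ^ (-ε) ≤ δ ^ (-ε) := Real.rpow_le_rpow_of_nonpos hδ hle (by linarith)
    gcongr
  · refine le_trans ?_ h.2
    rw [Real.rpow_add hpos, hflip, mul_comm]
    gcongr

lemma sideMoment_bounds {q τA τB : ℝ} (hq : 0 ≤ q) (hA : HasLq1 (S.μ.map Prod.fst) q τA)
    (hB : HasLq1 (S.μ.map Prod.snd) q τB) {r ε : ℝ} (hr : 0 < r) (hε : 0 < ε) :
    ∃ C : ℝ, 0 < C ∧ ∀ δ w, 0 < δ → r * δ ≤ S.long w →
      S.sideMoment q δ w ≠ ∞ ∧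
      (S.sideMoment q δ w).toReal ≤ C * δ ^ (-ε) * S.sidePower τA τB δ w ∧
      δ ^ ε * S.sidePower τA τB δ w ≤ C * (S.sideMoment q δ w).toReal := by
  have := S.isProb
  have hpA : IsProbabilityMeasure (S.μ.map Prod.fst) :=
    Measure.isProbabilityMeasure_map measurable_fst.aemeasurable
  have hpB : IsProbabilityMeasure (S.μ.map Prod.snd) :=
    Measure.isProbabilityMeasure_map measurable_snd.aemeasurable
  obtain ⟨CA, hCA, hbA⟩ := hA.bounds hq S.map_fst_compl hε (1 / r)
  obtain ⟨CB, hCB, hbB⟩ := hB.bounds hq S.map_snd_compl hε (1 / r)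
  refine ⟨max CA CB, lt_max_of_lt_left hCA, fun δ w hδ hrδ => ?_⟩
  have hmem : δ / S.long w ∈ Ioc 0 (1 / r) := by
    refine ⟨div_pos hδ (S.long_pos w), ?_⟩
    rw [div_le_div_iff₀ (S.long_pos w) hr]
    linarith
  have hlong1 : S.long w ≤ 1 := max_le (S.width_le_one w) (S.height_le_one w)
  have hδε : 0 < δ ^ (-ε) := Real.rpow_pos_of_pos hδ _
  have hT := S.sidePower_pos (τA := τA) (τB := τB) hδ w
  have hmul : 0 < δ ^ (-ε) * S.sidePower τA τB δ w := mul_pos hδε hT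
  by_cases hcd : S.height w ≤ S.width w
  · have hax : S.axis w = Prod.fst := if_pos hcd
    have hT' : S.sidePower τA τB δ w = (S.long w / δ) ^ τA := by
      rw [sidePower, if_pos hcd, long, max_eq_left hcd]
    unfold sideMoment
    rw [hax, toReal_eDq1 _ _ hq]
    obtain ⟨h1, h2⟩ := scaled_moment_bounds hε hδ (S.long_pos w) hlong1 hCA (hbA _ hmem)
    rw [← hT'] at h1 h2
    refine ⟨eDq1_ne_top hq S.map_fst_compl hmem.1, h1.trans ?_, h2.trans ?_⟩
    · rw [mul_assoc, mul_assoc]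
      exact mul_le_mul_of_nonneg_right (le_max_left _ _) hmul.le
    · refine mul_le_mul_of_nonneg_right (le_max_left _ _) ?_
      rw [← toReal_eDq1 _ _ hq]
      exact ENNReal.toReal_nonneg
  · have hax : S.axis w = Prod.snd := if_neg hcd
    have hT' : S.sidePower τA τB δ w = (S.long w / δ) ^ τB := by
      rw [sidePower, if_neg hcd, long, max_eq_right (not_le.1 hcd).le]
    unfold sideMoment
    rw [hax, toReal_eDq1 _ _ hq]
    obtain ⟨h1, h2⟩ := scaled_moment_bounds hε hδ (S.long_pos w) hlong1 hCB (hbB _ hmem)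
    rw [← hT'] at h1 h2
    refine ⟨eDq1_ne_top hq S.map_snd_compl hmem.1, h1.trans ?_, h2.trans ?_⟩
    · rw [mul_assoc, mul_assoc]
      exact mul_le_mul_of_nonneg_right (le_max_right _ _) hmul.le
    · refine mul_le_mul_of_nonneg_right (le_max_right _ _) ?_
      rw [← toReal_eDq1 _ _ hq]
      exact ENNReal.toReal_nonneg

/-- The stopping rectangles at scale `δ`: sides at least `r δ`, shortest side at most `δ`. -/
def IsStopping (r δ : ℝ) (K : Finset (List (Fin N))) : Prop :=
  Cut N K ∧ ∀ w ∈ K, r * δ ≤ S.width w ∧ r * δ ≤ S.height w ∧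
    min (S.width w) (S.height w) ≤ δ

/-- The planar moment sum is comparable, up to subpolynomial factors, with a sum over the
stopping rectangles. -/
lemma exists_comparison {q τA τB : ℝ} (hq : 0 ≤ q) (hA : HasLq1 (S.μ.map Prod.fst) q τA)
    (hB : HasLq1 (S.μ.map Prod.snd) q τB) :
    ∃ r : ℝ, 0 < r ∧ r ≤ 1 ∧ ∀ ε : ℝ, 0 < ε → ∃ C : ℝ, 0 < C ∧ ∀ δ ∈ Ioc (0 : ℝ) 1,
      ∃ K, S.IsStopping r δ K ∧
      Dq2 S.μ δ q ≤ C * δ ^ (-ε) * ∑ w ∈ K, S.prob w ^ q * S.sidePower τA τB δ w ∧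
      δ ^ ε * ∑ w ∈ K, S.prob w ^ q * S.sidePower τA τB δ w ≤ C * Dq2 S.μ δ q := by
  have := S.isProb
  obtain ⟨r, hr, hr1, hcut⟩ := exists_cut S.ha S.hb
  refine ⟨r, hr, hr1, fun ε hε => ?_⟩
  obtain ⟨C, hC, hside⟩ := S.sideMoment_bounds hq hA hB hr hε
  set M : ℕ := ⌊9 / r ^ 2⌋₊ * 5
  set C₁ : ℝ := (M : ℝ) ^ q * 25
  set C₂ : ℝ := (25 : ℝ) ^ q * M
  have hC₁ : 0 ≤ C₁ := by positivity
  have hC₂ : 0 ≤ C₂ := by positivity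
  refine ⟨(C₁ + C₂ + 1) * C, by positivity, fun δ hδ => ?_⟩
  obtain ⟨K, hK, hKw⟩ := hcut δ hδ.1 hδ.2
  refine ⟨K, ⟨hK, hKw⟩, ?_⟩
  have hδ0 : 0 < δ := hδ.1
  have hw : ∀ w ∈ K, r * δ ≤ S.width w ∧ r * δ ≤ S.height w :=
    fun w h => ⟨(hKw w h).1, (hKw w h).2.1⟩
  have hmin : ∀ w ∈ K, min (S.width w) (S.height w) ≤ δ := fun w h => (hKw w h).2.2
  have hs : ∀ w ∈ K, _ := fun w h => hside δ w hδ0 ((hw w h).1.trans (le_max_left _ _))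
  have hterm : ∀ w ∈ K, ENNReal.ofReal (S.prob w) ^ q * S.sideMoment q δ w ≠ ∞ := fun w h =>
    ENNReal.mul_ne_top (ENNReal.rpow_ne_top_of_nonneg hq ENNReal.ofReal_ne_top) (hs w h).1
  have hfin : ∑ w ∈ K, ENNReal.ofReal (S.prob w) ^ q * S.sideMoment q δ w ≠ ∞ :=
    ENNReal.sum_ne_top.2 hterm
  have hreal : (∑ w ∈ K, ENNReal.ofReal (S.prob w) ^ q * S.sideMoment q δ w).toReal =
      ∑ w ∈ K, S.prob w ^ q * (S.sideMoment q δ w).toReal := by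
    rw [ENNReal.toReal_sum hterm]
    refine Finset.sum_congr rfl fun w _ => ?_
    rw [ENNReal.toReal_mul, ← ENNReal.toReal_rpow, ENNReal.toReal_ofReal (S.prob_pos w).le]
  have hup := S.eDq2_le hK hq hr hr1 hδ0 hw hmin
  have hlow := S.sum_strips_le hK hq hr hr1 hδ0 hw hmin
  have hMtop : ((M : ℝ≥0∞)) ^ q * (25 : ℕ) ≠ ∞ := ENNReal.mul_ne_top
    (ENNReal.rpow_ne_top_of_nonneg hq (ENNReal.natCast_ne_top _)) (ENNReal.natCast_ne_top _)
  have hMtop' : ((25 : ℕ) : ℝ≥0∞) ^ q * (M : ℕ) ≠ ∞ := ENNReal.mul_ne_top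
    (ENNReal.rpow_ne_top_of_nonneg hq (ENNReal.natCast_ne_top _)) (ENNReal.natCast_ne_top _)
  have htop : eDq2 S.μ δ q ≠ ∞ := (hup.trans_lt (ENNReal.mul_ne_top hMtop hfin).lt_top).ne
  have hup' := ENNReal.toReal_mono (ENNReal.mul_ne_top hMtop hfin) hup
  have hlow' := ENNReal.toReal_mono (ENNReal.mul_ne_top hMtop' htop) hlow
  simp only [ENNReal.toReal_mul, ← ENNReal.toReal_rpow, ENNReal.toReal_natCast, hreal,
    toReal_eDq2 S.μ δ hq] at hup' hlow'
  have hδε : 0 < δ ^ (-ε) := Real.rpow_pos_of_pos hδ0 _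
  have hsum : 0 ≤ ∑ w ∈ K, S.prob w ^ q * S.sidePower τA τB δ w := Finset.sum_nonneg fun w _ =>
    mul_nonneg (Real.rpow_nonneg (S.prob_pos w).le _) (S.sidePower_pos hδ0 w).le
  have hD : 0 ≤ Dq2 S.μ δ q := by rw [← toReal_eDq2 S.μ δ hq]; exact ENNReal.toReal_nonneg
  constructor
  · have h1 : ∑ w ∈ K, S.prob w ^ q * (S.sideMoment q δ w).toReal ≤
        C * δ ^ (-ε) * ∑ w ∈ K, S.prob w ^ q * S.sidePower τA τB δ w := by
      rw [Finset.mul_sum]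
      refine Finset.sum_le_sum fun w h => ?_
      rw [mul_left_comm]
      exact mul_le_mul_of_nonneg_left (hs w h).2.1 (Real.rpow_nonneg (S.prob_pos w).le _)
    calc Dq2 S.μ δ q ≤ C₁ * (C * δ ^ (-ε) * ∑ w ∈ K, S.prob w ^ q * S.sidePower τA τB δ w) := by
          refine hup'.trans ?_
          push_cast
          exact mul_le_mul_of_nonneg_left h1 hC₁
      _ ≤ (C₁ + C₂ + 1) * (C * δ ^ (-ε) *
            ∑ w ∈ K, S.prob w ^ q * S.sidePower τA τB δ w) := by
          refine mul_le_mul_of_nonneg_right (by linarith) (by positivity)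
      _ = _ := by ring
  · calc δ ^ ε * ∑ w ∈ K, S.prob w ^ q * S.sidePower τA τB δ w
        ≤ C * ∑ w ∈ K, S.prob w ^ q * (S.sideMoment q δ w).toReal := by
          rw [Finset.mul_sum, Finset.mul_sum]
          refine Finset.sum_le_sum fun w h => ?_
          rw [mul_left_comm, mul_left_comm C]
          exact mul_le_mul_of_nonneg_left (hs w h).2.2 (Real.rpow_nonneg (S.prob_pos w).le _)
      _ ≤ C * (C₂ * Dq2 S.μ δ q) := by
          refine mul_le_mul_of_nonneg_left (hlow'.trans ?_) hC.le
          push_cast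
          exact le_rfl
      _ ≤ C * ((C₁ + C₂ + 1) * Dq2 S.μ δ q) := by
          gcongr
          linarith
      _ = _ := by ring

end DiagSystem

section Exponents

/-- `D δ` grows at most like `δ ^ (-M)` up to subpolynomial factors. -/
def UpperExponent (D : ℝ → ℝ) (M : ℝ) : Prop :=
  ∀ ε : ℝ, 0 < ε → ∃ C : ℝ, 0 < C ∧
    ∀ᶠ δ in nhdsWithin (0 : ℝ) (Ioi 0), D δ ≤ C * δ ^ (-M - ε)

/-- `D δ` grows at least like `δ ^ (-M)` up to subpolynomial factors. -/
def LowerExponent (D : ℝ → ℝ) (M : ℝ) : Prop :=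
  ∀ ε : ℝ, 0 < ε → ∃ C : ℝ, 0 < C ∧
    ∀ᶠ δ in nhdsWithin (0 : ℝ) (Ioi 0), δ ^ (-M + ε) ≤ C * D δ

variable {D : ℝ → ℝ} {M m : ℝ}

lemma eventually_log_le_mul (C : ℝ) {ε : ℝ} (hε : 0 < ε) :
    ∀ᶠ δ in nhdsWithin (0 : ℝ) (Ioi 0),
      0 < δ ∧ 0 < -Real.log δ ∧ Real.log C ≤ ε * -Real.log δ := by
  have h : Tendsto (fun δ : ℝ => -Real.log δ) (nhdsWithin 0 (Ioi 0)) atTop :=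
    tendsto_neg_atBot_atTop.comp Real.tendsto_log_nhdsGT_zero
  filter_upwards [h.eventually_gt_atTop 0, h.eventually_ge_atTop (Real.log C / ε),
    self_mem_nhdsWithin] with δ h1 h2 h3
  refine ⟨h3, h1, ?_⟩
  rw [div_le_iff₀ hε] at h2
  linarith

lemma LowerExponent.eventually (h : LowerExponent D m) {ε : ℝ} (hε : 0 < ε) :
    ∀ᶠ δ in nhdsWithin (0 : ℝ) (Ioi 0), 0 < D δ ∧ m - ε ≤ Real.log (D δ) / -Real.log δ := by
  obtain ⟨C, hC, hD⟩ := h (ε / 2) (half_pos hε)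
  filter_upwards [hD, eventually_log_le_mul C (half_pos hε)] with δ h1 ⟨hδ, hlog, h2⟩
  have hpos : 0 < δ ^ (-m + ε / 2) := Real.rpow_pos_of_pos hδ _
  have hD0 : 0 < D δ := pos_of_mul_pos_right (hpos.trans_le h1) hC.le
  refine ⟨hD0, ?_⟩
  have h3 := Real.log_le_log hpos h1
  rw [Real.log_rpow hδ, Real.log_mul hC.ne' hD0.ne'] at h3
  rw [le_div_iff₀ hlog]
  nlinarith

lemma UpperExponent.eventually (h : UpperExponent D M) (hl : LowerExponent D m) {ε : ℝ}
    (hε : 0 < ε) :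
    ∀ᶠ δ in nhdsWithin (0 : ℝ) (Ioi 0), Real.log (D δ) / -Real.log δ ≤ M + ε := by
  obtain ⟨C, hC, hD⟩ := h (ε / 2) (half_pos hε)
  filter_upwards [hD, eventually_log_le_mul C (half_pos hε), hl.eventually one_pos]
    with δ h1 ⟨hδ, hlog, h2⟩ ⟨hD0, _⟩
  have hpos : 0 < δ ^ (-M - ε / 2) := Real.rpow_pos_of_pos hδ _
  have h3 := Real.log_le_log hD0 h1
  rw [Real.log_mul hC.ne' hpos.ne', Real.log_rpow hδ] at h3
  rw [div_le_iff₀ hlog]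
  nlinarith

lemma LowerExponent.le (hl : LowerExponent D m) (hu : UpperExponent D M) : m ≤ M := by
  refine le_of_forall_pos_le_add fun ε hε => ?_
  obtain ⟨δ, h1, h2⟩ := ((hl.eventually (half_pos hε)).and
    (hu.eventually hl (half_pos hε))).exists
  linarith [h1.2]

lemma tendsto_of_exponents (hl : LowerExponent D M) (hu : UpperExponent D M) :
    Tendsto (fun δ => Real.log (D δ) / -Real.log δ) (nhdsWithin 0 (Ioi 0)) (nhds M) := by
  rw [tendsto_order]
  constructor
  · intro m hm
    filter_upwards [hl.eventually (half_pos (sub_pos.2 hm))] with δ h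
    linarith [h.2]
  · intro m hm
    filter_upwards [hu.eventually hl (half_pos (sub_pos.2 hm))] with δ h
    linarith

end Exponents

section Rectangle

variable {r u : ℝ}

lemma rpow_le_of_mem_Icc (hr : 0 < r) (hu : u ∈ Icc r 1) (e : ℝ) : u ^ e ≤ r ^ (-|e|) := by
  have hu0 : 0 < u := hr.trans_le hu.1
  have hr1 : r ≤ 1 := hu.1.trans hu.2
  calc u ^ e ≤ u ^ (-|e|) :=
        Real.rpow_le_rpow_of_exponent_ge hu0 hu.2 (by linarith [neg_abs_le e])
    _ ≤ r ^ (-|e|) := Real.rpow_le_rpow_of_nonpos hr hu.1 (by linarith [abs_nonneg e])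

/-- Comparison of `(c/δ)^τ` with `c^x d^y δ^{-(x+y)}` for a rectangle of height about `δ`. -/
lemma rpow_side_le {c d δ x y τ : ℝ} (hr : 0 < r) (hδ : 0 < δ) (hc : r * δ ≤ c)
    (hd : r * δ ≤ d) (hdδ : d ≤ δ) (hx : τ ≤ x) :
    (c / δ) ^ τ ≤ r ^ (-|x - τ| - |y|) * (c ^ x * d ^ y * δ ^ (-(x + y))) := by
  have hc0 : 0 < c := (mul_pos hr hδ).trans_le hc
  have hd0 : 0 < d := (mul_pos hr hδ).trans_le hd
  have hv : d / δ ∈ Icc r 1 := ⟨by rwa [le_div_iff₀ hδ], by rwa [div_le_one hδ]⟩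
  have hu : r ≤ c / δ := by rwa [le_div_iff₀ hδ]
  have hu0 : 0 < c / δ := by positivity
  have hv0 : 0 < d / δ := by positivity
  have hsplit : c ^ x * d ^ y * δ ^ (-(x + y)) = (c / δ) ^ x * (d / δ) ^ y := by
    rw [Real.div_rpow hc0.le hδ.le, Real.div_rpow hd0.le hδ.le, Real.rpow_neg hδ.le,
      Real.rpow_add hδ]
    field_simp
  have h1 : (c / δ) ^ (τ - x) ≤ r ^ (-|x - τ|) := by
    rw [abs_of_nonneg (sub_nonneg.2 hx), neg_sub]
    exact Real.rpow_le_rpow_of_nonpos hr hu (by linarith)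
  have h2 : (d / δ) ^ (-y) ≤ r ^ (-|y|) := by
    have := rpow_le_of_mem_Icc hr hv (-y)
    rwa [abs_neg] at this
  rw [hsplit, sub_eq_add_neg, Real.rpow_add hr]
  calc (c / δ) ^ τ = ((c / δ) ^ (τ - x) * (d / δ) ^ (-y)) * ((c / δ) ^ x * (d / δ) ^ y) := by
        rw [Real.rpow_sub hu0, Real.rpow_neg hv0.le]
        field_simp
    _ ≤ _ := by gcongr

/-- Converse comparison, valid when `x ≤ τ` or when the rectangle is not too elongated. -/
lemma le_rpow_side {c d δ x y τ ε : ℝ} (hr : 0 < r) (hδ : 0 < δ) (hδ1 : δ ≤ 1) (hε : 0 < ε)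
    (hc : r * δ ≤ c)
    (hd : r * δ ≤ d) (hdδ : d ≤ δ) (hx : x ≤ τ ∨ c ≤ d * δ ^ (-ε)) :
    c ^ x * d ^ y * δ ^ (-(x + y)) ≤
      r ^ (-|x - τ| - |y|) * δ ^ (-(ε * |x - τ|)) * (c / δ) ^ τ := by
  have hc0 : 0 < c := (mul_pos hr hδ).trans_le hc
  have hd0 : 0 < d := (mul_pos hr hδ).trans_le hd
  have hv : d / δ ∈ Icc r 1 := ⟨by rwa [le_div_iff₀ hδ], by rwa [div_le_one hδ]⟩
  have hr1 : r ≤ 1 := hv.1.trans hv.2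
  have hu : r ≤ c / δ := by rwa [le_div_iff₀ hδ]
  have hu0 : 0 < c / δ := by positivity
  have hv0 : 0 < d / δ := by positivity
  have hsplit : c ^ x * d ^ y * δ ^ (-(x + y)) = (c / δ) ^ x * (d / δ) ^ y := by
    rw [Real.div_rpow hc0.le hδ.le, Real.div_rpow hd0.le hδ.le, Real.rpow_neg hδ.le,
      Real.rpow_add hδ]
    field_simp
  have hδε : 1 ≤ δ ^ (-(ε * |x - τ|)) :=
    Real.one_le_rpow_of_pos_of_le_one_of_nonpos hδ hδ1
      (by have := mul_nonneg hε.le (abs_nonneg (x - τ)); linarith)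
  have hrx : 1 ≤ r ^ (-|x - τ|) :=
    Real.one_le_rpow_of_pos_of_le_one_of_nonpos hr hr1 (by linarith [abs_nonneg (x - τ)])
  have h1 : (c / δ) ^ (x - τ) ≤ r ^ (-|x - τ|) * δ ^ (-(ε * |x - τ|)) := by
    rcases le_or_gt x τ with hle | hlt
    · have : (c / δ) ^ (x - τ) ≤ r ^ (-|x - τ|) := by
        rw [abs_of_nonpos (sub_nonpos.2 hle), neg_neg]
        exact Real.rpow_le_rpow_of_nonpos hr hu (by linarith)
      nlinarith
    · have hcd := hx.resolve_left (not_le.2 hlt)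
      have h3 : c / δ ≤ δ ^ (-ε) := by
        rw [div_le_iff₀ hδ, mul_comm]
        exact hcd.trans (by gcongr)
      have : (c / δ) ^ (x - τ) ≤ δ ^ (-(ε * |x - τ|)) := by
        rw [abs_of_pos (sub_pos.2 hlt), ← neg_mul, Real.rpow_mul hδ.le]
        exact Real.rpow_le_rpow hu0.le h3 (by linarith)
      nlinarith
  have h2 := rpow_le_of_mem_Icc hr hv y
  rw [hsplit, sub_eq_add_neg (-|x - τ|), Real.rpow_add hr]
  calc (c / δ) ^ x * (d / δ) ^ y = (c / δ) ^ (x - τ) * (d / δ) ^ y * (c / δ) ^ τ := by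
        rw [Real.rpow_sub hu0]
        field_simp
    _ ≤ (r ^ (-|x - τ|) * δ ^ (-(ε * |x - τ|))) * r ^ (-|y|) * (c / δ) ^ τ := by gcongr
    _ = _ := by ring

end Rectangle

section Deviation

variable {N : ℕ} {P a b : Fin N → ℝ}

lemma prod_map_weight (ha : ∀ i, a i ∈ Ioo (0 : ℝ) 1) (hb : ∀ i, b i ∈ Ioo (0 : ℝ) 1)
    (x y : ℝ) (w : List (Fin N)) :
    (w.map (weight P a b x y)).prod =
      (w.map P).prod * (w.map a).prod ^ x * (w.map b).prod ^ y := by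
  rw [← prod_map_rpow (fun i => (ha i).1.le), ← prod_map_rpow (fun i => (hb i).1.le)]
  induction w with
  | nil => simp
  | cons i w ih =>
    simp only [List.map_cons, List.prod_cons, ih, weight]
    ring

/-- Words whose rectangles are much wider than high carry little mass when the drift is
nonpositive. -/
lemma exists_deviation_bound [NeZero N] (hP : ∀ i, 0 < P i) (ha : ∀ i, a i ∈ Ioo (0 : ℝ) 1)
    (hb : ∀ i, b i ∈ Ioo (0 : ℝ) 1) {x y r ε : ℝ} (hxy : partition P a b x y = 1)
    (hE : drift P a b x y ≤ 0) (hr : 0 < r) (hε : 0 < ε) :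
    ∃ s B : ℝ, 0 < s ∧ ∀ δ K, 0 < δ → Cut N K → (∀ w ∈ K, r * δ ≤ (w.map b).prod) →
      ∑ w ∈ K.filter (fun w => (w.map b).prod * δ ^ (-ε) < (w.map a).prod),
        (w.map (weight P a b x y)).prod ≤ B * δ ^ s := by
  obtain ⟨s, hs, hlt⟩ := exists_partition_lt_of_drift_nonpos hP ha hb hE (half_pos hε)
  rw [hxy] at hlt
  refine ⟨s * (ε / 2), r ^ (-(s * (ε / 2))), by positivity, fun δ K hδ hK hKb => ?_⟩
  have hsum := hK.sum_prod_le_one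
    (fun i => (weight_pos hP ha hb (x + s) (y - s + s * (ε / 2)) i).le) hlt.le
  have hterm : ∀ w ∈ K.filter (fun w => (w.map b).prod * δ ^ (-ε) < (w.map a).prod),
      (w.map (weight P a b x y)).prod ≤ r ^ (-(s * (ε / 2))) * δ ^ (s * (ε / 2)) *
        (w.map (weight P a b (x + s) (y - s + s * (ε / 2)))).prod := by
    intro w hw
    rw [Finset.mem_filter] at hw
    obtain ⟨hwK, hlt⟩ := hw
    have hd' := hKb w hwK
    rw [prod_map_weight ha hb, prod_map_weight ha hb]
    set c := (w.map a).prod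
    set d := (w.map b).prod
    have hc : 0 < c := prod_map_pos (fun i => (ha i).1) w
    have hd : 0 < d := prod_map_pos (fun i => (hb i).1) w
    have hPw : 0 < (w.map P).prod := prod_map_pos hP w
    have h1 : d ^ s * δ ^ (-(ε * s)) ≤ c ^ s := by
      rw [← neg_mul, Real.rpow_mul hδ.le, ← Real.mul_rpow hd.le (by positivity)]
      exact Real.rpow_le_rpow (by positivity) hlt.le hs.le
    have h2 : r ^ (s * (ε / 2)) * δ ^ (s * (ε / 2)) ≤ d ^ (s * (ε / 2)) := by
      rw [← Real.mul_rpow hr.le hδ.le]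
      exact Real.rpow_le_rpow (by positivity) hd' (by positivity)
    have h3 : δ ^ (-(ε * s)) = (δ ^ (s * (ε / 2)))⁻¹ * (δ ^ (s * (ε / 2)))⁻¹ := by
      rw [← Real.rpow_neg hδ.le, ← Real.rpow_add hδ]
      congr 1; ring
    rw [h3] at h1
    rw [Real.rpow_add hc, Real.rpow_add hd, Real.rpow_sub hd, Real.rpow_neg hr.le]
    have hE0 : 0 < δ ^ (s * (ε / 2)) := by positivity
    have hR0 : 0 < r ^ (s * (ε / 2)) := by positivity
    have hds : 0 < d ^ s := by positivity
    have hone : 1 ≤ (r ^ (s * (ε / 2)))⁻¹ * δ ^ (s * (ε / 2)) *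
        (c ^ s / d ^ s * d ^ (s * (ε / 2))) := by
      have h4 : (δ ^ (s * (ε / 2)))⁻¹ * (δ ^ (s * (ε / 2)))⁻¹ ≤ c ^ s / d ^ s := by
        rw [le_div_iff₀ hds, mul_comm]; exact h1
      calc (1 : ℝ) = (r ^ (s * (ε / 2)))⁻¹ * δ ^ (s * (ε / 2)) *
            ((δ ^ (s * (ε / 2)))⁻¹ * (δ ^ (s * (ε / 2)))⁻¹ *
              (r ^ (s * (ε / 2)) * δ ^ (s * (ε / 2)))) := by field_simp
        _ ≤ _ := by gcongr
    have hW : 0 < (w.map P).prod * c ^ x * d ^ y := by positivity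
    calc (w.map P).prod * c ^ x * d ^ y ≤ (w.map P).prod * c ^ x * d ^ y * _ :=
          le_mul_of_one_le_right hW.le hone
      _ = _ := by ring
  refine (Finset.sum_le_sum hterm).trans ?_
  rw [← Finset.mul_sum]
  refine mul_le_of_le_one_right (by positivity) ((Finset.sum_le_sum_of_subset_of_nonneg
    (Finset.filter_subset _ _) fun w _ _ => ?_).trans hsum)
  exact (prod_map_pos (weight_pos hP ha hb _ _) w).le

end Deviation

lemma eventually_deviation_le {N : ℕ} {P a b : Fin N → ℝ} [NeZero N] (hP : ∀ i, 0 < P i)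
    (ha : ∀ i, a i ∈ Ioo (0 : ℝ) 1) (hb : ∀ i, b i ∈ Ioo (0 : ℝ) 1) {x y r ε τ : ℝ}
    (hxy : partition P a b x y = 1) (hE : x ≤ τ ∨ drift P a b x y ≤ 0) (hr : 0 < r)
    (hε : 0 < ε) :
    ∀ᶠ δ in nhdsWithin (0 : ℝ) (Ioi 0), ∀ K, Cut N K → (∀ w ∈ K, r * δ ≤ (w.map b).prod) →
      ∑ w ∈ K.filter (fun w => ¬ (x ≤ τ ∨ (w.map a).prod ≤ (w.map b).prod * δ ^ (-ε))),
        (w.map (weight P a b x y)).prod ≤ 1 / 4 := by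
  by_cases hx : x ≤ τ
  · simp [hx]
  · obtain ⟨s, B, hs, hB⟩ := exists_deviation_bound hP ha hb hxy (hE.resolve_left hx) hr hε
    have hlim : Tendsto (fun δ : ℝ => B * δ ^ s) (nhdsWithin 0 (Ioi 0)) (nhds 0) := by
      have h := (Real.continuousAt_rpow_const 0 s (Or.inr hs.le)).tendsto.mono_left
        (nhdsWithin_le_nhds (s := Ioi 0))
      rw [Real.zero_rpow hs.ne'] at h
      simpa using h.const_mul B
    filter_upwards [hlim.eventually_le_const (show (0 : ℝ) < 1 / 4 by norm_num),
      self_mem_nhdsWithin] with δ h1 h2 K hK hKb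
    refine le_trans (le_of_eq ?_) ((hB δ K h2 hK hKb).trans h1)
    simp only [hx, false_or, not_le]

namespace DiagSystem

variable {N : ℕ} (S : DiagSystem N)

lemma rpow_prob_mul {q : ℝ} (x y : ℝ) (w : List (Fin N)) :
    (w.map (weight (fun i => S.p i ^ q) S.a S.b x y)).prod =
      S.prob w ^ q * (S.width w ^ x * S.height w ^ y) := by
  rw [prod_map_weight S.ha S.hb, prod_map_rpow fun i => (S.hp i).le, mul_assoc]
  rfl

/-- Upper bound for the growth of the planar moment sums. -/
lemma upperExponent {q τA τB : ℝ} (hq : 0 ≤ q)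
    (hA : HasLq1 (S.μ.map Prod.fst) q τA) (hB : HasLq1 (S.μ.map Prod.snd) q τB)
    {x y x' y' M : ℝ} (h : partition (fun i => S.p i ^ q) S.a S.b x y = 1)
    (h' : partition (fun i => S.p i ^ q) S.a S.b x' y' = 1) (hx : τA ≤ x) (hy : τB ≤ y')
    (hM : x + y ≤ M) (hM' : x' + y' ≤ M) :
    UpperExponent (fun δ => Dq2 S.μ δ q) M := by
  intro ε hε
  obtain ⟨r, hr, hr1, hcomp⟩ := S.exists_comparison hq hA hB
  obtain ⟨C, hC, hcomp⟩ := hcomp ε hε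
  set R₁ := r ^ (-|x - τA| - |y|)
  set R₂ := r ^ (-|y' - τB| - |x'|)
  have hR₁ : 0 < R₁ := Real.rpow_pos_of_pos hr _
  have hR₂ : 0 < R₂ := Real.rpow_pos_of_pos hr _
  refine ⟨C * (R₁ + R₂), by positivity, ?_⟩
  filter_upwards [Ioo_mem_nhdsGT (zero_lt_one (α := ℝ))] with δ hδ
  obtain ⟨K, ⟨hK, hKw⟩, hup, -⟩ := hcomp δ ⟨hδ.1, hδ.2.le⟩
  have hδ0 : 0 < δ := hδ.1
  have hle : ∀ {e : ℝ}, e ≤ M → δ ^ (-e) ≤ δ ^ (-M) := fun h =>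
    Real.rpow_le_rpow_of_exponent_ge hδ0 hδ.2.le (by linarith)
  have hterm : ∀ w ∈ K, S.prob w ^ q * S.sidePower τA τB δ w ≤
      R₁ * δ ^ (-M) * (w.map (weight (fun i => S.p i ^ q) S.a S.b x y)).prod +
      R₂ * δ ^ (-M) * (w.map (weight (fun i => S.p i ^ q) S.a S.b x' y')).prod := by
    intro w hw
    obtain ⟨hc, hd, hmin⟩ := hKw w hw
    have hc0 := S.width_pos w
    have hd0 := S.height_pos w
    have hp0 : 0 < S.prob w ^ q := Real.rpow_pos_of_pos (S.prob_pos w) _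
    rw [S.rpow_prob_mul, S.rpow_prob_mul]
    unfold sidePower
    split_ifs with hcd
    · rw [min_eq_right hcd] at hmin
      have h1 := rpow_side_le (y := y) hr hδ0 hc hd hmin hx
      have h2 := hle hM
      calc S.prob w ^ q * (S.width w / δ) ^ τA
          ≤ S.prob w ^ q * (R₁ * (S.width w ^ x * S.height w ^ y * δ ^ (-M))) := by
            gcongr
            exact h1.trans (by gcongr)
        _ = R₁ * δ ^ (-M) * (S.prob w ^ q * (S.width w ^ x * S.height w ^ y)) := by ring
        _ ≤ _ := le_add_of_nonneg_right (by positivity)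
    · have hcd := (not_le.1 hcd).le
      rw [min_eq_left hcd] at hmin
      have h1 := rpow_side_le (y := x') hr hδ0 hd hc hmin hy
      have h2 := hle hM'
      rw [add_comm y' x'] at h1
      calc S.prob w ^ q * (S.height w / δ) ^ τB
          ≤ S.prob w ^ q * (R₂ * (S.height w ^ y' * S.width w ^ x' * δ ^ (-M))) := by
            gcongr
            exact h1.trans (by gcongr)
        _ = R₂ * δ ^ (-M) * (S.prob w ^ q * (S.width w ^ x' * S.height w ^ y')) := by ring
        _ ≤ _ := le_add_of_nonneg_left (by positivity)
  have hsum := Finset.sum_le_sum hterm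
  rw [Finset.sum_add_distrib, ← Finset.mul_sum, ← Finset.mul_sum, hK.sum_prod_eq_one h,
    hK.sum_prod_eq_one h', mul_one, mul_one] at hsum
  have hδε : 0 < δ ^ (-ε) := Real.rpow_pos_of_pos hδ0 _
  calc Dq2 S.μ δ q ≤ C * δ ^ (-ε) * (R₁ * δ ^ (-M) + R₂ * δ ^ (-M)) :=
        hup.trans (by gcongr)
    _ = C * (R₁ + R₂) * δ ^ (-M - ε) := by
        rw [sub_eq_add_neg, Real.rpow_add hδ0]; ring

/-- Lower bound for the growth of the planar moment sums. -/
lemma lowerExponent [NeZero N] {q τA τB : ℝ} (hq : 0 ≤ q)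
    (hA : HasLq1 (S.μ.map Prod.fst) q τA) (hB : HasLq1 (S.μ.map Prod.snd) q τB)
    {x y : ℝ} (h : partition (fun i => S.p i ^ q) S.a S.b x y = 1)
    (hx : x ≤ τA ∨ drift (fun i => S.p i ^ q) S.a S.b x y ≤ 0)
    (hy : y ≤ τB ∨ 0 ≤ drift (fun i => S.p i ^ q) S.a S.b x y) :
    LowerExponent (fun δ => Dq2 S.μ δ q) (x + y) := by
  intro ε hε
  have hP : ∀ i, 0 < S.p i ^ q := fun i => Real.rpow_pos_of_pos (S.hp i) _
  obtain ⟨r, hr, hr1, hcomp⟩ := S.exists_comparison hq hA hB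
  obtain ⟨C, hC, hcomp⟩ := hcomp (ε / 2) (half_pos hε)
  set κ := 1 + |x - τA| + |y - τB| with hκ
  have hκ0 : 0 < κ := by positivity
  set η := ε / (2 * κ) with hη
  have hη0 : 0 < η := by positivity
  have hηκ : η * κ = ε / 2 := by rw [hη]; field_simp
  set R₁ := r ^ (-|x - τA| - |y|)
  set R₂ := r ^ (-|y - τB| - |x|)
  have hR₁ : 0 < R₁ := Real.rpow_pos_of_pos hr _
  have hR₂ : 0 < R₂ := Real.rpow_pos_of_pos hr _
  refine ⟨2 * (R₁ + R₂) * C, by positivity, ?_⟩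
  have hdevA := eventually_deviation_le hP S.ha S.hb h hx hr hη0
  have hdevB := eventually_deviation_le (a := S.b) (b := S.a) (x := y) (y := x) (τ := τB) hP S.hb
    S.ha (by rw [partition_swap, h]) (by rwa [drift_swap S.ha S.hb, neg_nonpos]) hr hη0
  filter_upwards [Ioo_mem_nhdsGT (zero_lt_one (α := ℝ)), hdevA, hdevB] with δ hδ hbadA hbadB
  obtain ⟨K, ⟨hK, hKw⟩, -, hlow⟩ := hcomp δ ⟨hδ.1, hδ.2.le⟩
  have hδ0 : 0 < δ := hδ.1
  specialize hbadA K hK fun w hw => (hKw w hw).2.1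
  specialize hbadB K hK fun w hw => (hKw w hw).1
  rw [funext (weight_swap (P := fun i => S.p i ^ q) (a := S.a) (b := S.b) x y)] at hbadB
  set W : List (Fin N) → ℝ := fun w =>
    (w.map (weight (fun i => S.p i ^ q) S.a S.b x y)).prod with hW
  have hW0 : ∀ w, 0 ≤ W w := fun w => (prod_map_pos (weight_pos hP S.ha S.hb x y) w).le
  have hδη : 0 < δ ^ (-(ε / 2)) := Real.rpow_pos_of_pos hδ0 _
  have hle : ∀ {e : ℝ}, e ≤ κ → δ ^ (-(η * e)) ≤ δ ^ (-(ε / 2)) := fun he =>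
    Real.rpow_le_rpow_of_exponent_ge hδ0 hδ.2.le (by rw [← hηκ]; nlinarith)
  have hκA : |x - τA| ≤ κ := by rw [hκ]; linarith [abs_nonneg (y - τB)]
  have hκB : |y - τB| ≤ κ := by rw [hκ]; linarith [abs_nonneg (x - τA)]
  have hterm : ∀ w ∈ K, W w * δ ^ (-(x + y)) ≤
      (R₁ + R₂) * δ ^ (-(ε / 2)) * (S.prob w ^ q * S.sidePower τA τB δ w) +
      ((if ¬ (x ≤ τA ∨ (w.map S.a).prod ≤ (w.map S.b).prod * δ ^ (-η)) then W w else 0) +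
      (if ¬ (y ≤ τB ∨ (w.map S.b).prod ≤ (w.map S.a).prod * δ ^ (-η)) then W w else 0)) *
        δ ^ (-(x + y)) := by
    intro w hw
    obtain ⟨hc, hd, hmin⟩ := hKw w hw
    have hc0 := S.width_pos w
    have hd0 := S.height_pos w
    have hp0 : 0 < S.prob w ^ q := Real.rpow_pos_of_pos (S.prob_pos w) _
    have hside : 0 ≤ (R₁ + R₂) * δ ^ (-(ε / 2)) * (S.prob w ^ q * S.sidePower τA τB δ w) :=
      mul_nonneg (by positivity) (mul_nonneg hp0.le (S.sidePower_pos hδ0 w).le)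
    have hδxy : 0 < δ ^ (-(x + y)) := Real.rpow_pos_of_pos hδ0 _
    have hWw := hW0 w
    by_cases hgA : x ≤ τA ∨ (w.map S.a).prod ≤ (w.map S.b).prod * δ ^ (-η)
    · by_cases hgB : y ≤ τB ∨ (w.map S.b).prod ≤ (w.map S.a).prod * δ ^ (-η)
      · rw [if_neg (not_not.2 hgA), if_neg (not_not.2 hgB), add_zero, zero_mul, add_zero]
        simp only [hW]
        rw [S.rpow_prob_mul]
        unfold sidePower
        split_ifs with hcd
        · rw [min_eq_right hcd] at hmin
          have h1 := le_rpow_side (y := y) hr hδ0 hδ.2.le hη0 hc hd hmin hgA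
          have h2 := hle hκA
          calc S.prob w ^ q * (S.width w ^ x * S.height w ^ y) * δ ^ (-(x + y))
              = S.prob w ^ q * (S.width w ^ x * S.height w ^ y * δ ^ (-(x + y))) := by ring
            _ ≤ S.prob w ^ q * ((R₁ + R₂) * δ ^ (-(ε / 2)) * (S.width w / δ) ^ τA) := by
                refine mul_le_mul_of_nonneg_left (h1.trans ?_) hp0.le
                gcongr
                exact le_add_of_nonneg_right hR₂.le
            _ = _ := by ring
        · have hcd := (not_le.1 hcd).le
          rw [min_eq_left hcd] at hmin
          have h1 := le_rpow_side (y := x) hr hδ0 hδ.2.le hη0 hd hc hmin hgB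
          have h2 := hle hκB
          rw [add_comm y x] at h1
          calc S.prob w ^ q * (S.width w ^ x * S.height w ^ y) * δ ^ (-(x + y))
              = S.prob w ^ q * (S.height w ^ y * S.width w ^ x * δ ^ (-(x + y))) := by ring
            _ ≤ S.prob w ^ q * ((R₁ + R₂) * δ ^ (-(ε / 2)) * (S.height w / δ) ^ τB) := by
                refine mul_le_mul_of_nonneg_left (h1.trans ?_) hp0.le
                gcongr
                exact le_add_of_nonneg_left hR₁.le
            _ = _ := by ring
      · rw [if_neg (not_not.2 hgA), if_pos hgB, zero_add]
        linarith
    · rw [if_pos hgA]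
      have : 0 ≤ (if ¬ (y ≤ τB ∨ (w.map S.b).prod ≤ (w.map S.a).prod * δ ^ (-η)) then W w
          else 0) := by split_ifs <;> simp [hWw]
      nlinarith
  have hsum := Finset.sum_le_sum hterm
  rw [Finset.sum_add_distrib, ← Finset.mul_sum, ← Finset.sum_mul, ← Finset.sum_mul,
    Finset.sum_add_distrib, ← Finset.sum_filter, ← Finset.sum_filter,
    hK.sum_prod_eq_one h, one_mul] at hsum
  set T := ∑ w ∈ K, S.prob w ^ q * S.sidePower τA τB δ w
  have hδxy : 0 < δ ^ (-(x + y)) := Real.rpow_pos_of_pos hδ0 _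
  have hmain : δ ^ (-(x + y)) ≤ 2 * ((R₁ + R₂) * δ ^ (-(ε / 2)) * T) := by nlinarith
  have hcancel : δ ^ ε * δ ^ (-(ε / 2)) = δ ^ (ε / 2) := by
    rw [← Real.rpow_add hδ0]; congr 1; ring
  calc δ ^ (-(x + y) + ε) = δ ^ ε * δ ^ (-(x + y)) := by rw [Real.rpow_add hδ0, mul_comm]
    _ ≤ δ ^ ε * (2 * ((R₁ + R₂) * δ ^ (-(ε / 2)) * T)) := by gcongr
    _ = 2 * (R₁ + R₂) * (δ ^ ε * δ ^ (-(ε / 2)) * T) := by ring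
    _ = 2 * (R₁ + R₂) * (δ ^ (ε / 2) * T) := by rw [hcancel]
    _ ≤ 2 * (R₁ + R₂) * (C * Dq2 S.μ δ q) := by gcongr
    _ = _ := by ring

end DiagSystem

section Curve

variable {N : ℕ} [NeZero N] {P a b : Fin N → ℝ} {x₀ y₀ x₁ y₁ x y : ℝ}

lemma drift_sign_of_minimal (hP : ∀ i, 0 < P i) (ha : ∀ i, a i ∈ Ioo (0 : ℝ) 1)
    (hb : ∀ i, b i ∈ Ioo (0 : ℝ) 1) (h₀ : partition P a b x₀ y₀ = 1)
    (h₁ : partition P a b x₁ y₁ = 1) (h : partition P a b x y = 1) (hx₀ : x₀ ≤ x) (hx₁ : x ≤ x₁)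
    (hmin : ∀ x' y', partition P a b x' y' = 1 → x₀ ≤ x' → x' ≤ x₁ → x + y ≤ x' + y') :
    (x ≤ x₀ ∨ drift P a b x y ≤ 0) ∧ (y ≤ y₁ ∨ 0 ≤ drift P a b x y) := by
  refine ⟨drift_nonpos_of_minimal hP ha hb h h₁ hx₁ hmin, ?_⟩
  have key := drift_nonpos_of_minimal (P := P) (x₀ := y₁) (x₁ := y₀) (y₁ := x₀) (x := y) (y := x)
    hP hb ha (by rwa [partition_swap]) (by rwa [partition_swap])
    ((le_iff_of_partition_eq hP ha hb (h₀.trans h.symm)).1 hx₀) (by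
      intro y' x' h' hy₁ hy₀
      rw [partition_swap] at h'
      have := hmin x' y' h' ((le_iff_of_partition_eq hP ha hb (h₀.trans h'.symm)).2 hy₀)
        ((le_iff_of_partition_eq hP ha hb (h'.trans h₁.symm)).2 hy₁)
      linarith)
  rwa [drift_swap ha hb, neg_nonpos] at key

lemma eq_of_partition_eq (hP : ∀ i, 0 < P i) (ha : ∀ i, a i ∈ Ioo (0 : ℝ) 1)
    (hb : ∀ i, b i ∈ Ioo (0 : ℝ) 1) (h₀ : partition P a b x₀ y₀ = 1)
    (h : partition P a b x y = 1) (hx : x₀ = x) : y₀ = y :=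
  le_antisymm ((le_iff_of_partition_eq hP ha hb (h.trans h₀.symm)).1 hx.ge)
    ((le_iff_of_partition_eq hP ha hb (h₀.trans h.symm)).1 hx.le)

/-- When the drift points inward at both ends of the arc, a minimiser of `x + y` is critical and
strictly better than both endpoints. -/
lemma drift_eq_zero_of_minimal (hP : ∀ i, 0 < P i) (ha : ∀ i, a i ∈ Ioo (0 : ℝ) 1)
    (hb : ∀ i, b i ∈ Ioo (0 : ℝ) 1) (h₀ : partition P a b x₀ y₀ = 1)
    (h₁ : partition P a b x₁ y₁ = 1) (h : partition P a b x y = 1) (hx₀ : x₀ ≤ x) (hx₁ : x ≤ x₁)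
    (hmin : ∀ x' y', partition P a b x' y' = 1 → x₀ ≤ x' → x' ≤ x₁ → x + y ≤ x' + y')
    (hd₀ : drift P a b x₀ y₀ < 0) (hd₁ : 0 < drift P a b x₁ y₁) :
    drift P a b x y = 0 ∧ x + y < min (x₀ + y₀) (x₁ + y₁) := by
  have hle : x₀ ≤ x₁ := hx₀.trans hx₁
  have hx : x₀ < x₁ := by
    refine lt_of_le_of_ne hle fun hx => ?_
    have hy := eq_of_partition_eq hP ha hb h₀ h₁ hx
    subst hx hy
    exact lt_asymm hd₀ hd₁
  have hy : y₁ < y₀ := by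
    by_contra! hy
    exact hx.not_ge ((le_iff_of_partition_eq hP ha hb (h₁.trans h₀.symm)).2 hy)
  have hlt₀ : x + y < x₀ + y₀ := by
    by_contra! hcon
    rcases (drift_sign_of_minimal hP ha hb h₀ h₁ h₀ le_rfl hle fun x' y' h' h1 h2 =>
      hcon.trans (hmin x' y' h' h1 h2)).2 with h2 | h2 <;> linarith
  have hlt₁ : x + y < x₁ + y₁ := by
    by_contra! hcon
    rcases (drift_sign_of_minimal hP ha hb h₀ h₁ h₁ hle le_rfl fun x' y' h' h1 h2 =>
      hcon.trans (hmin x' y' h' h1 h2)).1 with h2 | h2 <;> linarith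
  refine ⟨?_, lt_min hlt₀ hlt₁⟩
  obtain ⟨hA, hB⟩ := drift_sign_of_minimal hP ha hb h₀ h₁ h hx₀ hx₁ hmin
  rcases hA with hA | hA
  · have := eq_of_partition_eq hP ha hb h₀ h (le_antisymm hx₀ hA)
    linarith
  rcases hB with hB | hB
  · have h1 := (le_iff_of_partition_eq hP ha hb (h₁.trans h.symm)).2 hB
    have := eq_of_partition_eq hP ha hb h₁ h (le_antisymm h1 hx₁)
    linarith
  exact le_antisymm hA hB

end Curve

namespace DiagSystem

variable {N : ℕ} (S : DiagSystem N)

lemma rpow_prob_pos (q : ℝ) (i : Fin N) : 0 < S.p i ^ q := Real.rpow_pos_of_pos (S.hp i) q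

variable [NeZero N] {q τA τB γA γB : ℝ}

lemma exponents_max (hq : 0 ≤ q)
    (hA : HasLq1 (S.μ.map Prod.fst) q τA) (hB : HasLq1 (S.μ.map Prod.snd) q τB)
    (h₀ : partition (fun i => S.p i ^ q) S.a S.b τA (γA - τA) = 1)
    (h₁ : partition (fun i => S.p i ^ q) S.a S.b (γB - τB) τB = 1)
    (hγ : max γA γB ≤ τA + τB) :
    LowerExponent (fun δ => Dq2 S.μ δ q) (max γA γB) ∧
      UpperExponent (fun δ => Dq2 S.μ δ q) (max γA γB) := by
  have hγA := (le_max_left _ _).trans hγ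
  have hγB := (le_max_right _ _).trans hγ
  refine ⟨?_, S.upperExponent hq hA hB h₀ h₁ le_rfl le_rfl (by simp) (by simp)⟩
  have l₀ := S.lowerExponent hq hA hB h₀ (.inl le_rfl) (.inl (by linarith))
  have l₁ := S.lowerExponent hq hA hB h₁ (.inl (by linarith)) (.inl le_rfl)
  rw [add_sub_cancel] at l₀
  rw [sub_add_cancel] at l₁
  rcases max_choice γA γB with h | h <;> rwa [h]

lemma exponents_of_minimal (hq : 0 ≤ q)
    (hA : HasLq1 (S.μ.map Prod.fst) q τA) (hB : HasLq1 (S.μ.map Prod.snd) q τB)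
    (h₀ : partition (fun i => S.p i ^ q) S.a S.b τA (γA - τA) = 1)
    (h₁ : partition (fun i => S.p i ^ q) S.a S.b (γB - τB) τB = 1) {x y : ℝ}
    (h : partition (fun i => S.p i ^ q) S.a S.b x y = 1) (hx₀ : τA ≤ x) (hx₁ : x ≤ γB - τB)
    (hmin : ∀ x' y', partition (fun i => S.p i ^ q) S.a S.b x' y' = 1 → τA ≤ x' →
      x' ≤ γB - τB → x + y ≤ x' + y') :
    LowerExponent (fun δ => Dq2 S.μ δ q) (x + y) ∧
      UpperExponent (fun δ => Dq2 S.μ δ q) (x + y) := by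
  have hP := S.rpow_prob_pos q
  obtain ⟨hx, hy⟩ := drift_sign_of_minimal hP S.ha S.hb h₀ h₁ h hx₀ hx₁ hmin
  exact ⟨S.lowerExponent hq hA hB h hx hy, S.upperExponent hq hA hB h h hx₀
    ((le_iff_of_partition_eq hP S.ha S.hb (h.trans h₁.symm)).1 hx₁) le_rfl le_rfl⟩

end DiagSystem

theorem spectrum_diagonal {N : ℕ} [NeZero N] (S : DiagSystem N) {q τA τB γA γB : ℝ} (hq : 0 ≤ q)
    (hA : HasLq1 (S.μ.map Prod.fst) q τA) (hB : HasLq1 (S.μ.map Prod.snd) q τB)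
    {F G : ℝ → ℝ → ℝ} (hF : ∀ x y, F x y = partition (fun i => S.p i ^ q) S.a S.b x y)
    (hG : ∀ x y, G x y = drift (fun i => S.p i ^ q) S.a S.b x y)
    (h₀ : F τA (γA - τA) = 1) (h₁ : F (γB - τB) τB = 1) :
    (max γA γB ≤ τA + τB ∨ τA + τB ≤ min γA γB) ∧
    ∃ τ : ℝ, HasLq2 S.μ q τ ∧
      (max γA γB ≤ τA + τB →
        τ = max γA γB ∧
        IsGreatest {s : ℝ | ∃ x y : ℝ, F x y = 1 ∧ γB - τB ≤ x ∧ x ≤ τA ∧ s = x + y} τ ∧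
        IsGreatest {s : ℝ | ∃ x y : ℝ, F x y = 1 ∧ γA - τA ≤ y ∧ y ≤ τB ∧ s = x + y} τ) ∧
      (τA + τB ≤ min γA γB →
        IsLeast {s : ℝ | ∃ x y : ℝ, F x y = 1 ∧ τA ≤ x ∧ x ≤ γB - τB ∧ s = x + y} τ ∧
        IsLeast {s : ℝ | ∃ x y : ℝ, F x y = 1 ∧ τB ≤ y ∧ y ≤ γA - τA ∧ s = x + y} τ ∧
        (0 ≤ G τA (γA - τA) → τ = γA) ∧
        (G (γB - τB) τB ≤ 0 → τ = γB) ∧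
        (¬ 0 ≤ G τA (γA - τA) ∧ ¬ G (γB - τB) τB ≤ 0 →
          ∃ x y : ℝ, τA ≤ x ∧ x ≤ γB - τB ∧ τB ≤ y ∧ y ≤ γA - τA ∧
            F x y = 1 ∧ G x y = 0 ∧ τ = x + y ∧ τ < min γA γB)) := by
  obtain rfl : F = partition (fun i => S.p i ^ q) S.a S.b := funext₂ hF
  obtain rfl : G = drift (fun i => S.p i ^ q) S.a S.b := funext₂ hG
  have hP := S.rpow_prob_pos q
  have mono : ∀ {x y x' y'}, partition (fun i => S.p i ^ q) S.a S.b x y = 1 →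
      partition (fun i => S.p i ^ q) S.a S.b x' y' = 1 → (x ≤ x' ↔ y' ≤ y) := fun h h' =>
    le_iff_of_partition_eq hP S.ha S.hb (h.trans h'.symm)
  have hdich : max γA γB ≤ τA + τB ∨ τA + τB ≤ min γA γB := by
    rcases le_total (γB - τB) τA with h | h
    · have := (mono h₁ h₀).1 h
      exact .inl (max_le (by linarith) (by linarith))
    · have := (mono h₀ h₁).1 h
      exact .inr (le_min (by linarith) (by linarith))
  have hex : τA + τB ≤ min γA γB → ∃ x y, partition (fun i => S.p i ^ q) S.a S.b x y = 1 ∧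
      τA ≤ x ∧ x ≤ γB - τB ∧ ∀ x' y', partition (fun i => S.p i ^ q) S.a S.b x' y' = 1 →
        τA ≤ x' → x' ≤ γB - τB → x + y ≤ x' + y' := fun h =>
    exists_minimal_on_curve hP S.ha S.hb h₀ h₁ (by linarith [h.trans (min_le_right _ _)])
  obtain ⟨τ, hl, hu⟩ : ∃ τ, LowerExponent (fun δ => Dq2 S.μ δ q) τ ∧
      UpperExponent (fun δ => Dq2 S.μ δ q) τ := by
    rcases hdich with h | h
    · exact ⟨_, S.exponents_max hq hA hB h₀ h₁ h⟩
    · obtain ⟨x, y, h, hx₀, hx₁, hmin⟩ := hex h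
      exact ⟨_, S.exponents_of_minimal hq hA hB h₀ h₁ h hx₀ hx₁ hmin⟩
  refine ⟨hdich, τ, tendsto_of_exponents hl hu, fun hγ => ?_, fun hγ => ?_⟩
  · have hγA := (le_max_left _ _).trans hγ
    have hγB := (le_max_right _ _).trans hγ
    obtain ⟨hl', hu'⟩ := S.exponents_max hq hA hB h₀ h₁ hγ
    obtain rfl : τ = max γA γB := le_antisymm (hl.le hu') (hl'.le hu)
    have hgreat : IsGreatest {s : ℝ | ∃ x y : ℝ,
        partition (fun i => S.p i ^ q) S.a S.b x y = 1 ∧ γB - τB ≤ x ∧ x ≤ τA ∧ s = x + y}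
        (max γA γB) := by
      constructor
      · rcases max_choice γA γB with h | h <;> rw [h]
        · exact ⟨_, _, h₀, by linarith, le_rfl, by ring⟩
        · exact ⟨_, _, h₁, le_rfl, by linarith, by ring⟩
      · rintro s ⟨x, y, h, hx₁, hx₀, rfl⟩
        simpa using add_le_max_of_partition_eq_one hP S.ha S.hb h₀ h₁ h hx₁ hx₀
    refine ⟨rfl, hgreat, ?_⟩
    convert hgreat using 5 with s x
    refine exists_congr fun y => and_congr_right fun h => ?_
    rw [← and_assoc, ← and_assoc, ← mono h h₀, ← mono h₁ h, and_comm (a := x ≤ τA)]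
  · obtain ⟨x, y, h, hx₀, hx₁, hmin⟩ := hex hγ
    obtain ⟨hl', hu'⟩ := S.exponents_of_minimal hq hA hB h₀ h₁ h hx₀ hx₁ hmin
    obtain rfl : τ = x + y := le_antisymm (hl.le hu') (hl'.le hu)
    have hx₀₁ := hx₀.trans hx₁
    have hleast : IsLeast {s : ℝ | ∃ x y : ℝ,
        partition (fun i => S.p i ^ q) S.a S.b x y = 1 ∧ τA ≤ x ∧ x ≤ γB - τB ∧ s = x + y}
        (x + y) := by
      refine ⟨⟨x, y, h, hx₀, hx₁, rfl⟩, ?_⟩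
      rintro s ⟨x', y', h', hx₀', hx₁', rfl⟩
      exact hmin x' y' h' hx₀' hx₁'
    have hle₀ := hmin _ _ h₀ le_rfl hx₀₁
    have hle₁ := hmin _ _ h₁ hx₀₁ le_rfl
    refine ⟨hleast, ?_, fun hd => ?_, fun hd => ?_, fun hd => ?_⟩
    · convert hleast using 5 with s x
      refine exists_congr fun y => and_congr_right fun h => ?_
      rw [← and_assoc, ← and_assoc, ← mono h h₁, ← mono h₀ h, and_comm (a := x ≤ γB - τB)]
    · have := (S.lowerExponent hq hA hB h₀ (.inl le_rfl) (.inr hd)).le hu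
      linarith
    · have := (S.lowerExponent hq hA hB h₁ (.inr hd) (.inl le_rfl)).le hu
      linarith
    · obtain ⟨hd₀, hlt⟩ := drift_eq_zero_of_minimal hP S.ha S.hb h₀ h₁ h hx₀ hx₁ hmin
        (not_le.1 hd.1) (not_le.1 hd.2)
      exact ⟨x, y, hx₀, hx₁, (mono h h₁).1 hx₁, (mono h₀ h).1 hx₀, h, hd₀, rfl, by simpa using hlt⟩

end LqGIFS

/-- the diagonal IFS case; answer to Fraser's question.  For a planar
box-like self-affine IFS with all linear parts diagonal, satisfying the ROSC, with a
positive probability vector `p` and self-affine measure `μ`:  for each `q ≥ 0` the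
dichotomy holds, `τ_μ(q)` exists, and it is given by the stated closed forms in cases
(a), (b), with the refinements (b1), (b2), (b3). -/
theorem statement5
    (N : ℕ) (hN : 1 ≤ N)
    (a b sa sb : Fin N → ℝ) (tr : Fin N → ℝ × ℝ)
    (ha : ∀ i, a i ∈ Set.Ioo (0 : ℝ) 1) (hb : ∀ i, b i ∈ Set.Ioo (0 : ℝ) 1)
    (hsa : ∀ i, sa i = 1 ∨ sa i = -1) (hsb : ∀ i, sb i = 1 ∨ sb i = -1)
    (ψ : Fin N → ℝ × ℝ → ℝ × ℝ)
    (hψ : ∀ i z, ψ i z =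
      (sa i * a i * z.1 + (tr i).1, sb i * b i * z.2 + (tr i).2))
    (hROSC : (∀ i, ψ i '' (Set.Ioo (0:ℝ) 1 ×ˢ Set.Ioo (0:ℝ) 1) ⊆
        Set.Ioo (0:ℝ) 1 ×ˢ Set.Ioo (0:ℝ) 1) ∧
      ∀ i j, i ≠ j → Disjoint (ψ i '' (Set.Ioo (0:ℝ) 1 ×ˢ Set.Ioo (0:ℝ) 1))
        (ψ j '' (Set.Ioo (0:ℝ) 1 ×ˢ Set.Ioo (0:ℝ) 1)))
    (p : Fin N → ℝ) (hp : ∀ i, 0 < p i) (hp1 : ∑ i, p i = 1)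
    (μ : Measure (ℝ × ℝ)) (hprob : IsProbabilityMeasure μ)
    (hμ : μ = ∑ i : Fin N, ENNReal.ofReal (p i) • μ.map (ψ i))
    (q : ℝ) (hq : 0 ≤ q)
    (τA τB : ℝ)
    (hτA : HasLq1 (μ.map Prod.fst) q τA)
    (hτB : HasLq1 (μ.map Prod.snd) q τB)
    (γA γB : ℝ)
    (hγA : (∑ i, p i ^ q * a i ^ τA * b i ^ (γA - τA)) = 1)
    (hγB : (∑ i, p i ^ q * a i ^ (γB - τB) * b i ^ τB) = 1) :
    (max γA γB ≤ τA + τB ∨ τA + τB ≤ min γA γB) ∧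
    ∃ τ : ℝ, HasLq2 μ q τ ∧
      (max γA γB ≤ τA + τB →
        τ = max γA γB ∧
        IsGreatest {s : ℝ | ∃ x y : ℝ, (∑ i, p i ^ q * a i ^ x * b i ^ y) = 1 ∧
          γB - τB ≤ x ∧ x ≤ τA ∧ s = x + y} τ ∧
        IsGreatest {s : ℝ | ∃ x y : ℝ, (∑ i, p i ^ q * a i ^ x * b i ^ y) = 1 ∧
          γA - τA ≤ y ∧ y ≤ τB ∧ s = x + y} τ) ∧
      (τA + τB ≤ min γA γB →
        IsLeast {s : ℝ | ∃ x y : ℝ, (∑ i, p i ^ q * a i ^ x * b i ^ y) = 1 ∧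
          τA ≤ x ∧ x ≤ γB - τB ∧ s = x + y} τ ∧
        IsLeast {s : ℝ | ∃ x y : ℝ, (∑ i, p i ^ q * a i ^ x * b i ^ y) = 1 ∧
          τB ≤ y ∧ y ≤ γA - τA ∧ s = x + y} τ ∧
        ((0 ≤ ∑ i, p i ^ q * a i ^ τA * b i ^ (γA - τA) * Real.log (a i / b i)) →
          τ = γA) ∧
        ((∑ i, p i ^ q * b i ^ τB * a i ^ (γB - τB) * Real.log (a i / b i)) ≤ 0 →
          τ = γB) ∧
        ((¬ (0 ≤ ∑ i, p i ^ q * a i ^ τA * b i ^ (γA - τA) * Real.log (a i / b i)) ∧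
          ¬ ((∑ i, p i ^ q * b i ^ τB * a i ^ (γB - τB) * Real.log (a i / b i)) ≤ 0)) →
          ∃ x y : ℝ, τA ≤ x ∧ x ≤ γB - τB ∧ τB ≤ y ∧ y ≤ γA - τA ∧
            (∑ i, p i ^ q * a i ^ x * b i ^ y) = 1 ∧
            (∑ i, p i ^ q * a i ^ x * b i ^ y * Real.log (a i / b i)) = 0 ∧
            τ = x + y ∧ τ < min γA γB)) := by
  have : NeZero N := ⟨by omega⟩
  have hψ' : ∀ i, ψ i = fun z : ℝ × ℝ =>
      (sa i * a i * z.1 + (tr i).1, sb i * b i * z.2 + (tr i).2) := fun i => funext (hψ i)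
  have habs : ∀ {s c : ℝ}, s = 1 ∨ s = -1 → c ∈ Ioo (0 : ℝ) 1 → |s * c| = c := by
    rintro s c (rfl | rfl) hc <;> simp [abs_of_pos hc.1]
  let S : DiagSystem N :=
    { a := a, b := b, m := fun i => sa i * a i, n := fun i => sb i * b i, tr := tr, p := p, μ := μ
      ha := ha
      hb := hb
      hm := fun i => habs (hsa i) (ha i)
      hn := fun i => habs (hsb i) (hb i)
      mapsTo_sq := fun i => hψ' i ▸ mapsTo_iff_image_subset.2 (hROSC.1 i)
      disjoint_sq := fun i j hij => hψ' i ▸ hψ' j ▸ hROSC.2 i j hij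
      hp := hp
      hp1 := hp1
      isProb := hprob
      invariant := by simpa only [← hψ'] using hμ }
  have hcomm : ∑ i, p i ^ q * b i ^ τB * a i ^ (γB - τB) * Real.log (a i / b i) =
      ∑ i, p i ^ q * a i ^ (γB - τB) * b i ^ τB * Real.log (a i / b i) :=
    Finset.sum_congr rfl fun i _ => by ring
  rw [hcomm]
  exact spectrum_diagonal S hq hτA hτB
    (F := fun x y => ∑ i, p i ^ q * a i ^ x * b i ^ y)
    (G := fun x y => ∑ i, p i ^ q * a i ^ x * b i ^ y * Real.log (a i / b i))
    (fun _ _ => rfl) (fun _ _ => rfl) hγA hγB
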